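/- arXiv:2212.13943 — 9 statements merged into one kernel-verified Lean document; each statement's English description precedes it below -/
import Mathlib

section
/- Let Δv > 0, let f : ℤ → ℝ be finitely supported, and let n, ũ, T̃ ∈ ℝ satisfy the discrete moment relations n = Δv·∑_{j∈ℤ} f_j, n·ũ = Δv·∑_{j∈ℤ} v_{j+1/2} f_{j+1/2}, and n·T̃ = Δv·∑_{j∈ℤ} (v_{j+1/2} − ũ)² f_{j+1/2}. Then the second-order discrete Fokker–Planck operator Q satisfies Δv·∑_{j∈ℤ} Q_j = 0, Δv·∑_{j∈ℤ} v_j Q_j = 0, and Δv·∑_{j∈ℤ} (v_j²/2) Q_j = 0 (discrete conservation of mass, momentum and kinetic energy). -/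
noncomputable section

/-- Grid points `v_j = j·Δv`. -/
def vgrid (Δv : ℝ) (j : ℤ) : ℝ := j * Δv

/-- Half-grid average `f_{j+1/2} = (f_j + f_{j+1})/2`. -/
def fhalf (f : ℤ → ℝ) (j : ℤ) : ℝ := (f j + f (j + 1)) / 2

/-- Half-grid point `v_{j+1/2} = (v_j + v_{j+1})/2`. -/
def vhalf (Δv : ℝ) (j : ℤ) : ℝ := (vgrid Δv j + vgrid Δv (j + 1)) / 2

/-- Second-order discrete Fokker–Planck operator
`Q_j = (1/Δv)[f_{j+1/2}(v_{j+1/2}−ũ) − f_{j−1/2}(v_{j−1/2}−ũ)] + (T̃/Δv²)(f_{j+1}−2f_j+f_{j−1})`. -/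
def Qdisc (Δv ut Tt : ℝ) (f : ℤ → ℝ) (j : ℤ) : ℝ :=
  (1 / Δv) * (fhalf f j * (vhalf Δv j - ut) - fhalf f (j - 1) * (vhalf Δv (j - 1) - ut))
    + (Tt / Δv ^ 2) * (f (j + 1) - 2 * f j + f (j - 1))

/-!
The operator is a discrete divergence, `Q_j = (F_{j+1/2} - F_{j-1/2}) / Δv`, so summation by parts
moves the difference onto the test function. For the test functions `1`, `v` and `v² / 2` the
differences are `0`, `Δv` and `Δv · v_{j+1/2}`, and what remains to be seen is that `∑ F_{j+1/2}`
and `∑ v_{j+1/2} F_{j+1/2}` vanish. The first is the centred first moment of `f_{j+1/2}`. In the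
second, the drift contributes the centred second moment and, by another summation by parts, the
diffusion contributes `-T̃ ∑ f_j`. As `F` grows like `v f`, a finite third moment of `f` makes every
sum converge.
-/

section SummationByParts

theorem hasSum_comp_add_one_iff {M : Type*} [AddCommMonoid M] [TopologicalSpace M] {g : ℤ → M}
    {a : M} : HasSum (fun j => g (j + 1)) a ↔ HasSum g a :=
  (Equiv.addRight (1 : ℤ)).hasSum_iff

theorem hasSum_mul_sub_comp_sub_one {R : Type*} [Ring R] [TopologicalSpace R]
    [IsTopologicalAddGroup R] {φ F : ℤ → R} {a : R} (hφF : Summable fun j => φ j * F j)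
    (h : HasSum (fun j => (φ (j + 1) - φ j) * F j) a) :
    HasSum (fun j => φ j * (F j - F (j - 1))) (-a) := by
  have shifted : HasSum (fun j => φ j * F (j - 1)) (∑' j, φ j * F j + a) := by
    rw [← hasSum_comp_add_one_iff]
    simpa [sub_mul] using hφF.hasSum.add h
  simpa [mul_sub] using hφF.hasSum.sub shifted

end SummationByParts

/-- The sequence `g` has absolutely convergent moments `∑ j ^ k * g j` of every order `k ≤ d`.
The moments are taken in the index `j`, so that the notion does not depend on a mesh size. -/
def SummableMoments (d : ℕ) (g : ℤ → ℝ) : Prop :=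
  ∀ k ≤ d, Summable fun j : ℤ => (j : ℝ) ^ k * g j

namespace SummableMoments

variable {d : ℕ} {g h : ℤ → ℝ}

theorem of_summable_pow_mul (hg : Summable fun j : ℤ => (j : ℝ) ^ d * g j) :
    SummableMoments d g := by
  intro k hk
  refine hg.norm.of_norm_bounded_eventually ?_
  filter_upwards [(Set.finite_singleton (0 : ℤ)).compl_mem_cofinite] with j hj
  have one_le_abs : (1 : ℝ) ≤ |(j : ℝ)| := mod_cast Int.one_le_abs hj
  simp only [norm_mul, norm_pow, Real.norm_eq_abs]
  gcongr

theorem summable (hg : SummableMoments d g) : Summable g := by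
  simpa using hg 0 d.zero_le

theorem mono {e : ℕ} (hg : SummableMoments d g) (hed : e ≤ d) : SummableMoments e g :=
  fun k hk => hg k (hk.trans hed)

theorem add (hg : SummableMoments d g) (hh : SummableMoments d h) :
    SummableMoments d fun j => g j + h j := fun k hk => by
  simpa only [mul_add] using (hg k hk).add (hh k hk)

theorem const_mul (hg : SummableMoments d g) (c : ℝ) : SummableMoments d fun j => c * g j :=
  fun k hk => by simpa only [mul_left_comm] using (hg k hk).mul_left c

theorem sub (hg : SummableMoments d g) (hh : SummableMoments d h) :
    SummableMoments d fun j => g j - h j := fun k hk => by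
  simpa only [mul_sub] using (hg k hk).sub (hh k hk)

theorem index_mul (hg : SummableMoments (d + 1) g) : SummableMoments d fun j => j * g j :=
  fun k hk => by simpa only [pow_succ, mul_assoc] using hg (k + 1) (by lia)

theorem affine_mul (hg : SummableMoments (d + 1) g) (a b : ℝ) :
    SummableMoments d fun j => (a * j + b) * g j := by
  simpa only [add_mul, mul_assoc] using
    (hg.index_mul.const_mul a).add ((hg.mono d.le_succ).const_mul b)

theorem comp_add_one (hg : SummableMoments d g) : SummableMoments d fun j => g (j + 1) := by
  induction d generalizing g with
  | zero =>
    refine of_summable_pow_mul ?_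
    simpa using (hasSum_comp_add_one_iff.mpr hg.summable.hasSum).summable
  | succ d ih =>
    refine of_summable_pow_mul ?_
    convert (ih hg.index_mul).sub (ih (hg.mono d.le_succ)) d le_rfl using 2 with j
    push_cast
    ring

end SummableMoments

section Grid

variable {Δv : ℝ}

theorem vgrid_add_one_sub (j : ℤ) : vgrid Δv (j + 1) - vgrid Δv j = Δv := by
  simp only [vgrid, Int.cast_add, Int.cast_one]
  ring

theorem vhalf_eq (j : ℤ) : vhalf Δv j = Δv * j + Δv / 2 := by
  simp only [vhalf, vgrid, Int.cast_add, Int.cast_one]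
  ring

theorem vhalf_add_one_sub (j : ℤ) : vhalf Δv (j + 1) - vhalf Δv j = Δv := by
  simp only [vhalf_eq, Int.cast_add, Int.cast_one]
  ring

theorem vgrid_sq_div_two_add_one_sub (j : ℤ) :
    vgrid Δv (j + 1) ^ 2 / 2 - vgrid Δv j ^ 2 / 2 = Δv * vhalf Δv j := by
  simp only [vhalf, vgrid, Int.cast_add, Int.cast_one]
  ring

end Grid

namespace SummableMoments

variable {d : ℕ} {g : ℤ → ℝ}

theorem vgrid_mul (hg : SummableMoments (d + 1) g) (Δv : ℝ) :
    SummableMoments d fun j => vgrid Δv j * g j := by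
  simpa only [vgrid, add_zero, mul_comm Δv] using hg.affine_mul Δv 0

theorem vhalf_sub_mul (hg : SummableMoments (d + 1) g) (Δv u : ℝ) :
    SummableMoments d fun j => (vhalf Δv j - u) * g j := by
  simpa only [vhalf_eq, add_sub_assoc] using hg.affine_mul Δv (Δv / 2 - u)

theorem fhalf (hg : SummableMoments d g) : SummableMoments d (fhalf g) := by
  convert (hg.add hg.comp_add_one).const_mul 2⁻¹ using 2 with j
  exact div_eq_inv_mul _ _

end SummableMoments

/-- The numerical flux `F_{j+1/2} = f_{j+1/2} (v_{j+1/2} - ũ) + T̃ (f_{j+1} - f_j) / Δv`, drift plus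
diffusion, whose discrete divergence is `Qdisc`. The index `j` stands for `j + 1/2`. -/
def flux (Δv ut Tt : ℝ) (f : ℤ → ℝ) (j : ℤ) : ℝ :=
  (vhalf Δv j - ut) * fhalf f j + Tt / Δv * (f (j + 1) - f j)

section FokkerPlanck

variable {Δv ut Tt S m e : ℝ} {f : ℤ → ℝ}

theorem Qdisc_eq_flux_sub_div (j : ℤ) :
    Qdisc Δv ut Tt f j = (flux Δv ut Tt f j - flux Δv ut Tt f (j - 1)) / Δv := by
  simp only [Qdisc, flux, sub_add_cancel]
  ring

theorem hasSum_mul_Qdisc {φ : ℤ → ℝ} {a : ℝ} (hφ : Summable fun j => φ j * flux Δv ut Tt f j)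
    (h : HasSum (fun j => (φ (j + 1) - φ j) * flux Δv ut Tt f j) a) :
    HasSum (fun j => φ j * Qdisc Δv ut Tt f j) (-a / Δv) := by
  simpa only [Qdisc_eq_flux_sub_div, mul_div_assoc] using
    (hasSum_mul_sub_comp_sub_one hφ h).div_const Δv

theorem SummableMoments.flux {d : ℕ} (hf : SummableMoments (d + 1) f) (Δv ut Tt : ℝ) :
    SummableMoments d (flux Δv ut Tt f) :=
  have hf' := hf.mono d.le_succ
  (hf.fhalf.vhalf_sub_mul Δv ut).add ((hf'.comp_add_one.sub hf').const_mul (Tt / Δv))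

theorem hasSum_fhalf (hS : HasSum f S) : HasSum (fhalf f) S := by
  have average := (hS.add (hasSum_comp_add_one_iff.mpr hS)).div_const 2
  rwa [add_self_div_two] at average

theorem hasSum_flux (hf : Summable f)
    (hm : HasSum (fun j => (vhalf Δv j - ut) * fhalf f j) m) : HasSum (flux Δv ut Tt f) m := by
  have diffusion := (hasSum_comp_add_one_iff.mpr hf.hasSum).sub hf.hasSum
  have drift_add_diffusion := hm.add (diffusion.mul_left (Tt / Δv))
  rwa [sub_self, mul_zero, add_zero] at drift_add_diffusion

theorem hasSum_vhalf_mul_sub (hf : SummableMoments 1 f) (hS : HasSum f S) :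
    HasSum (fun j => vhalf Δv j * (f (j + 1) - f j)) (-(Δv * S)) := by
  have summable_vhalf : Summable fun j => vhalf Δv j * f (j + 1) := by
    simpa only [sub_zero] using (hf.comp_add_one.vhalf_sub_mul Δv 0).summable
  have hasSum_diff : HasSum (fun j => (vhalf Δv (j + 1) - vhalf Δv j) * f (j + 1)) (Δv * S) := by
    simpa only [vhalf_add_one_sub] using (hasSum_comp_add_one_iff.mpr hS).mul_left Δv
  simpa only [sub_add_cancel] using hasSum_mul_sub_comp_sub_one summable_vhalf hasSum_diff

theorem hasSum_vhalf_mul_flux (hΔv : Δv ≠ 0) (hf : SummableMoments 1 f) (hS : HasSum f S)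
    (hm : HasSum (fun j => (vhalf Δv j - ut) * fhalf f j) m)
    (he : HasSum (fun j => (vhalf Δv j - ut) ^ 2 * fhalf f j) e) :
    HasSum (fun j => vhalf Δv j * flux Δv ut Tt f j) (e + ut * m - Tt * S) := by
  convert (he.add (hm.mul_left ut)).add ((hasSum_vhalf_mul_sub hf hS).mul_left (Tt / Δv)) using 1
  · ext j
    simp only [flux]
    ring
  · field_simp
    ring

theorem hasSum_Qdisc (hf : SummableMoments 1 f) : HasSum (Qdisc Δv ut Tt f) 0 := by
  have summable_flux : Summable fun j => 1 * flux Δv ut Tt f j := by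
    simpa only [one_mul] using (hf.flux Δv ut Tt).summable
  simpa using hasSum_mul_Qdisc (φ := fun _ => 1) (a := 0) summable_flux (by simp [hasSum_zero])

theorem hasSum_vgrid_mul_Qdisc (hΔv : Δv ≠ 0) (hf : SummableMoments 2 f)
    (hm : HasSum (fun j => (vhalf Δv j - ut) * fhalf f j) m) :
    HasSum (fun j => vgrid Δv j * Qdisc Δv ut Tt f j) (-m) := by
  have hasSum_diff : HasSum
      (fun j => (vgrid Δv (j + 1) - vgrid Δv j) * flux Δv ut Tt f j) (Δv * m) := by
    simpa only [vgrid_add_one_sub] using (hasSum_flux hf.summable hm).mul_left Δv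
  convert hasSum_mul_Qdisc ((hf.flux Δv ut Tt).vgrid_mul Δv).summable hasSum_diff using 1
  field_simp

theorem hasSum_vgrid_sq_div_two_mul_Qdisc (hΔv : Δv ≠ 0) (hf : SummableMoments 3 f)
    (hS : HasSum f S) (hm : HasSum (fun j => (vhalf Δv j - ut) * fhalf f j) m)
    (he : HasSum (fun j => (vhalf Δv j - ut) ^ 2 * fhalf f j) e) :
    HasSum (fun j => vgrid Δv j ^ 2 / 2 * Qdisc Δv ut Tt f j) (-(e + ut * m - Tt * S)) := by
  have summable_flux : Summable fun j => vgrid Δv j ^ 2 / 2 * flux Δv ut Tt f j := by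
    refine ((((hf.flux Δv ut Tt).vgrid_mul Δv).vgrid_mul Δv).summable.div_const 2).congr ?_
    intro j
    ring
  have hasSum_diff : HasSum
      (fun j => (vgrid Δv (j + 1) ^ 2 / 2 - vgrid Δv j ^ 2 / 2) * flux Δv ut Tt f j)
      (Δv * (e + ut * m - Tt * S)) := by
    simpa only [vgrid_sq_div_two_add_one_sub, mul_assoc] using
      (hasSum_vhalf_mul_flux hΔv (hf.mono (by simp)) hS hm he).mul_left Δv
  convert hasSum_mul_Qdisc summable_flux hasSum_diff using 1
  field_simp

theorem hasSum_vhalf_sub_mul_fhalf_zero (hΔv : Δv ≠ 0) (hf : SummableMoments 1 f)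
    (hu : Δv * (∑' j, f j) * ut = Δv * ∑' j, vhalf Δv j * fhalf f j) :
    HasSum (fun j => (vhalf Δv j - ut) * fhalf f j) 0 := by
  have summable_vhalf : Summable fun j => vhalf Δv j * fhalf f j := by
    simpa only [sub_zero] using (hf.fhalf.vhalf_sub_mul Δv 0).summable
  have mean : ∑' j, vhalf Δv j * fhalf f j = ut * ∑' j, f j :=
    mul_left_cancel₀ hΔv (by linear_combination -hu)
  simpa only [sub_mul, mean, sub_self] using
    summable_vhalf.hasSum.sub ((hasSum_fhalf hf.summable.hasSum).mul_left ut)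

theorem hasSum_vhalf_sub_sq_mul_fhalf (hΔv : Δv ≠ 0) (hf : SummableMoments 2 f)
    (hT : Δv * (∑' j, f j) * Tt = Δv * ∑' j, (vhalf Δv j - ut) ^ 2 * fhalf f j) :
    HasSum (fun j => (vhalf Δv j - ut) ^ 2 * fhalf f j) (Tt * ∑' j, f j) := by
  have summable_sq : Summable fun j => (vhalf Δv j - ut) ^ 2 * fhalf f j := by
    simpa only [sq, mul_assoc] using
      ((hf.fhalf.vhalf_sub_mul Δv ut).vhalf_sub_mul Δv ut).summable
  have variance : ∑' j, (vhalf Δv j - ut) ^ 2 * fhalf f j = Tt * ∑' j, f j :=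
    mul_left_cancel₀ hΔv (by linear_combination -hT)
  exact variance ▸ summable_sq.hasSum

end FokkerPlanck

theorem stmt0_general (Δv n ut Tt : ℝ) (hΔv : Δv ≠ 0) (f : ℤ → ℝ)
    (hf : Summable fun j => vgrid Δv j ^ 3 * f j)
    (hn : n = Δv * ∑' j : ℤ, f j)
    (hu : n * ut = Δv * ∑' j : ℤ, vhalf Δv j * fhalf f j)
    (hT : n * Tt = Δv * ∑' j : ℤ, (vhalf Δv j - ut) ^ 2 * fhalf f j) :
    Δv * ∑' j : ℤ, Qdisc Δv ut Tt f j = 0 ∧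
    Δv * ∑' j : ℤ, vgrid Δv j * Qdisc Δv ut Tt f j = 0 ∧
    Δv * ∑' j : ℤ, (vgrid Δv j ^ 2 / 2) * Qdisc Δv ut Tt f j = 0 := by
  subst hn
  have moments : SummableMoments 3 f := by
    refine .of_summable_pow_mul ((summable_mul_left_iff (pow_ne_zero 3 hΔv)).mp ?_)
    simpa only [vgrid, mul_pow, mul_comm, mul_left_comm] using hf
  have mean := hasSum_vhalf_sub_mul_fhalf_zero hΔv (moments.mono (by simp)) hu
  have variance := hasSum_vhalf_sub_sq_mul_fhalf hΔv (moments.mono (by simp)) hT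
  have mass := hasSum_Qdisc (Δv := Δv) (ut := ut) (Tt := Tt) (moments.mono (by simp))
  have momentum := hasSum_vgrid_mul_Qdisc (Tt := Tt) hΔv (moments.mono (by simp)) mean
  have energy := hasSum_vgrid_sq_div_two_mul_Qdisc (Tt := Tt) hΔv moments
    moments.summable.hasSum mean variance
  simp [mass.tsum_eq, momentum.tsum_eq, energy.tsum_eq]

/-- Discrete conservation of mass, momentum and kinetic energy for the second-order
discrete Fokker–Planck operator. -/
theorem stmt0 (Δv n ut Tt : ℝ) (hΔv : 0 < Δv) (f : ℤ → ℝ)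
    (hf : (Function.support f).Finite)
    (hn : n = Δv * ∑' j : ℤ, f j)
    (hu : n * ut = Δv * ∑' j : ℤ, vhalf Δv j * fhalf f j)
    (hT : n * Tt = Δv * ∑' j : ℤ, (vhalf Δv j - ut) ^ 2 * fhalf f j) :
    Δv * ∑' j : ℤ, Qdisc Δv ut Tt f j = 0 ∧
    Δv * ∑' j : ℤ, vgrid Δv j * Qdisc Δv ut Tt f j = 0 ∧
    Δv * ∑' j : ℤ, (vgrid Δv j ^ 2 / 2) * Qdisc Δv ut Tt f j = 0 :=
  stmt0_general Δv n ut Tt hΔv.ne' f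
    (summable_of_hasFiniteSupport (hf.subset (Function.support_mul_subset_right _ _))) hn hu hT

end
end

section
/- Let Δv > 0, ũ ∈ ℝ, T̃ > 0, let f : ℤ → ℝ be finitely supported, and let M : ℤ → ℝ satisfy M_j > 0 for all j. Define the flux F_{j+1/2} = f_{j+1/2}(v_{j+1/2} − ũ) + (T̃/Δv)(f_{j+1} − f_j), so that the second-order discrete Fokker–Planck operator is Q_j = (F_{j+1/2} − F_{j−1/2})/Δv. Assume there exists a sequence M̃ : ℤ → ℝ with M̃_{j+1/2} ≥ 0 for all j such that F_{j+1/2} = (T̃/Δv)·M̃_{j+1/2}·(f_{j+1}/M_{j+1} − f_j/M_j) for every j ∈ ℤ. Then Δv·∑_{j∈ℤ} Q_j · (f_j/M_j) ≤ 0. -/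
noncomputable section

/-- The flux `F_{j+1/2} = f_{j+1/2}(v_{j+1/2} − ũ) + (T̃/Δv)(f_{j+1} − f_j)`. -/
def flux2 (Δv ut Tt : ℝ) (f : ℤ → ℝ) (j : ℤ) : ℝ :=
  fhalf f j * (vhalf Δv j - ut) + (Tt / Δv) * (f (j + 1) - f j)

section SummationByParts

variable {G R : Type*} [AddGroup G] [NonUnitalNonAssocRing R] [TopologicalSpace R]
  [IsTopologicalAddGroup R] {F g : G → R} {a : G}

theorem tsum_sub_shift_mul_eq_neg [T2Space R] (hF : Summable fun j ↦ F j * g j)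
    (hF' : Summable fun j ↦ F (j - a) * g j) :
    ∑' j, (F j - F (j - a)) * g j = -∑' j, F j * (g (j + a) - g j) := by
  have shift (j : G) : F (j + a - a) * g (j + a) = F j * g (j + a) := by
    rw [add_sub_cancel_right]
  have hg' : Summable fun j ↦ F j * g (j + a) :=
    ((Equiv.addRight a).summable_iff.mpr hF').congr shift
  calc ∑' j, (F j - F (j - a)) * g j
      = ∑' j, F j * g j - ∑' j, F (j - a) * g j := by
        simp only [sub_mul, hF.tsum_sub hF']
    _ = ∑' j, F j * g j - ∑' j, F j * g (j + a) := by
        rw [← (Equiv.addRight a).tsum_eq fun j ↦ F (j - a) * g j]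
        exact congrArg _ (tsum_congr shift)
    _ = -∑' j, F j * (g (j + a) - g j) := by
        simp only [mul_sub, hg'.tsum_sub hF, neg_sub]

theorem tsum_sub_shift_mul_nonpos [PartialOrder R] [IsOrderedAddMonoid R]
    [OrderClosedTopology R] (hF : Summable fun j ↦ F j * g j)
    (hF' : Summable fun j ↦ F (j - a) * g j) (h : ∀ j, 0 ≤ F j * (g (j + a) - g j)) :
    ∑' j, (F j - F (j - a)) * g j ≤ 0 := by
  rw [tsum_sub_shift_mul_eq_neg hF hF']
  exact neg_nonpos.mpr (tsum_nonneg h)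

end SummationByParts

theorem hasFiniteSupport_div_of_left {ι K : Type*} [GroupWithZero K] {f : ι → K}
    (hf : f.HasFiniteSupport) (g : ι → K) : Function.HasFiniteSupport fun j ↦ f j / g j := by
  simp only [div_eq_mul_inv]
  exact hf.mul_left fun j ↦ (g j)⁻¹

theorem mul_nonneg_of_eq_nonneg_mul {R : Type*} [Ring R] [LinearOrder R] [IsOrderedRing R]
    {x y w : R} (hw : 0 ≤ w) (hx : x = w * y) : 0 ≤ x * y := by
  rw [hx, mul_assoc]
  exact mul_nonneg hw (mul_self_nonneg y)

/-- `g` plays the role of `f / M`, and the `L²` form of the flux is replaced by the condition that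
`F` points along the discrete gradient of `g`. -/
theorem stmt1_general {Δv : ℝ} (hΔv : Δv ≠ 0) {F g : ℤ → ℝ}
    (hF : Summable fun j ↦ F j * g j) (hF' : Summable fun j ↦ F (j - 1) * g j)
    (h : ∀ j, 0 ≤ F j * (g (j + 1) - g j)) :
    Δv * ∑' j, ((F j - F (j - 1)) / Δv) * g j ≤ 0 := by
  have cancel (j : ℤ) : Δv * ((F j - F (j - 1)) / Δv * g j) = (F j - F (j - 1)) * g j := by
    rw [← mul_assoc, mul_div_cancel₀ _ hΔv]
  simpa only [← tsum_mul_left, cancel] using tsum_sub_shift_mul_nonpos hF hF' h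

/-- Discrete entropy inequality: if the standard-form flux admits an `L²`-form
representation with nonnegative weights `M̃_{j+1/2}`, then
`Δv·∑_j Q_j (f_j/M_j) ≤ 0`, where `Q_j = (F_{j+1/2} − F_{j−1/2})/Δv`. -/
theorem stmt1 (Δv ut Tt : ℝ) (hΔv : 0 < Δv) (hTt : 0 < Tt)
    (f M Mt : ℤ → ℝ) (hf : (Function.support f).Finite)
    (hM : ∀ j : ℤ, 0 < M j) (hMt : ∀ j : ℤ, 0 ≤ Mt j)
    (hflux : ∀ j : ℤ, flux2 Δv ut Tt f j
      = (Tt / Δv) * Mt j * (f (j + 1) / M (j + 1) - f j / M j)) :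
    Δv * ∑' j : ℤ,
      ((flux2 Δv ut Tt f j - flux2 Δv ut Tt f (j - 1)) / Δv) * (f j / M j) ≤ 0 := by
  have hg := hasFiniteSupport_div_of_left hf M
  exact stmt1_general hΔv.ne' (summable_of_hasFiniteSupport (hg.mul_right _))
    (summable_of_hasFiniteSupport (hg.mul_right _))
    fun j ↦ mul_nonneg_of_eq_nonneg_mul (mul_nonneg (div_pos hTt hΔv).le (hMt j)) (hflux j)

end
end

section
/- Let u ∈ ℝ, T > 0, n > 0, and let M(w) = (n/√(2πT))·exp(−(w − u)²/(2T)) be the Maxwellian. Let f : ℝ → ℝ be twice continuously differentiable and fix v ∈ ℝ such that f'(v)·M(v) − f(v)·M'(v) ≠ 0. For h > 0 define M̃(h) = (h/T)·[M(v)M(v+h)·((f(v)+f(v+h))/2)·(v + h/2 − u)] / (f(v+h)M(v) − f(v)M(v+h)) + [M(v)M(v+h)·(f(v+h) − f(v))] / (f(v+h)M(v) − f(v)M(v+h)). Then there exist constants C > 0 and δ > 0 such that for all 0 < h < δ, the denominator f(v+h)M(v) − f(v)M(v+h) is nonzero and |M̃(h) − M(v + h/2)| ≤ C·h². In particular M̃(h)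 > 0 for all sufficiently small h > 0. -/
noncomputable section

/-- The Maxwellian `M(w) = (n/√(2πT))·exp(−(w−u)²/(2T))`. -/
def Maxw (n u T : ℝ) (w : ℝ) : ℝ :=
  n / Real.sqrt (2 * Real.pi * T) * Real.exp (-(w - u) ^ 2 / (2 * T))

/-- The reconstructed half-grid Maxwellian weight `M̃(h)`. -/
def Mtilde (n u T : ℝ) (f : ℝ → ℝ) (v h : ℝ) : ℝ :=
  (h / T) * (Maxw n u T v * Maxw n u T (v + h) * ((f v + f (v + h)) / 2) * (v + h / 2 - u))
      / (f (v + h) * Maxw n u T v - f v * Maxw n u T (v + h))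
    + (Maxw n u T v * Maxw n u T (v + h) * (f (v + h) - f v))
      / (f (v + h) * Maxw n u T v - f v * Maxw n u T (v + h))

/-!
Let `s = log (M(v) / M(v + h)) / 2`, which for a Gaussian is exactly `h (v + h/2 - u) / (2T)`, and
`κ = M(v + h/2) / √(M(v) M(v + h)) = exp (h² / (8T))`. With `f₀ = f(v)`, `f₁ = f(v + h)` and `W`
the common denominator of `M̃(h)`,

`W (M̃(h) - M(v + h/2)) = M(v) M(v + h) ((f₁ - f₀) (1 - κ cosh s) + (f₀ + f₁) (s - κ sinh s))`.

Since `s = O(h)`, `κ = 1 + O(h²)` and `f₁ - f₀ = O(h)`, the right-hand side is `O(h³)`, while `W` is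
of exact order `h` because its derivative at `h = 0` is the Wronskian of `f` and `M`.
-/

open Asymptotics Filter Real Topology

section Hyperbolic

lemma cosh_sub_one_isBigO_sq : (fun x : ℝ ↦ cosh x - 1) =O[𝓝 0] fun x ↦ x ^ 2 := by
  have exp_taylor : (fun x : ℝ ↦ exp x - (1 + x)) =O[𝓝 0] fun x ↦ x ^ 2 := by
    simpa [Finset.sum_range_succ] using exp_sub_sum_range_isBigO_pow 2
  have exp_neg_taylor : (fun x : ℝ ↦ exp (-x) - (1 + -x)) =O[𝓝 0] fun x ↦ x ^ 2 := by
    simpa [Function.comp_def] using exp_taylor.comp_tendsto (continuous_neg.tendsto' 0 0 neg_zero)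
  refine ((exp_taylor.add exp_neg_taylor).const_mul_left (1 / 2)).congr_left fun x ↦ ?_
  rw [cosh_eq]
  ring

lemma sinh_sub_self_isBigO_pow_three : (fun x : ℝ ↦ sinh x - x) =O[𝓝 0] fun x ↦ x ^ 3 := by
  have exp_taylor : (fun x : ℝ ↦ exp x - (1 + x + x ^ 2 / 2)) =O[𝓝 0] fun x ↦ x ^ 3 := by
    simpa [Finset.sum_range_succ] using exp_sub_sum_range_isBigO_pow 3
  have exp_neg_taylor :
      (fun x : ℝ ↦ exp (-x) - (1 + -x + x ^ 2 / 2)) =O[𝓝 0] fun x ↦ x ^ 3 := by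
    simpa [Function.comp_def, Odd.neg_pow (by decide : Odd 3)] using
      exp_taylor.comp_tendsto (continuous_neg.tendsto' 0 0 neg_zero)
  refine ((exp_taylor.sub exp_neg_taylor).const_mul_left (1 / 2)).congr_left fun x ↦ ?_
  rw [sinh_eq]
  ring

variable {α : Type*} {l : Filter α} {s κ η : α → ℝ}

lemma one_sub_mul_cosh_isBigO_sq (hs₀ : Tendsto s l (𝓝 0)) (hs : s =O[l] η)
    (hκ : (fun a ↦ κ a - 1) =O[l] fun a ↦ η a ^ 2) :
    (fun a ↦ 1 - κ a * cosh (s a)) =O[l] fun a ↦ η a ^ 2 := by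
  have cosh_bounded : (fun a ↦ cosh (s a)) =O[l] fun _ ↦ (1 : ℝ) :=
    ((continuous_cosh.tendsto 0).comp hs₀).isBigO_one ℝ
  have cosh_sub_one : (fun a ↦ cosh (s a) - 1) =O[l] fun a ↦ η a ^ 2 :=
    (cosh_sub_one_isBigO_sq.comp_tendsto hs₀).trans (hs.pow 2)
  have factor_error := (hκ.mul cosh_bounded).congr_right fun a ↦ mul_one (η a ^ 2)
  exact (factor_error.add cosh_sub_one).neg_left.congr_left fun a ↦ by ring

lemma sub_mul_sinh_isBigO_pow_three (hs₀ : Tendsto s l (𝓝 0)) (hs : s =O[l] η)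
    (hκ : (fun a ↦ κ a - 1) =O[l] fun a ↦ η a ^ 2) :
    (fun a ↦ s a - κ a * sinh (s a)) =O[l] fun a ↦ η a ^ 3 := by
  have sinh_isBigO : (fun a ↦ sinh (s a)) =O[l] η := by
    have sinh_isBigO_id : sinh =O[𝓝 0] fun x ↦ x := by
      simpa using (hasDerivAt_sinh 0).isBigO_sub
    exact (sinh_isBigO_id.comp_tendsto hs₀).trans hs
  have sinh_sub_self : (fun a ↦ sinh (s a) - s a) =O[l] fun a ↦ η a ^ 3 :=
    (sinh_sub_self_isBigO_pow_three.comp_tendsto hs₀).trans (hs.pow 3)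
  have factor_error := (hκ.mul sinh_isBigO).congr_right fun a ↦ (pow_succ (η a) 2).symm
  exact (factor_error.add sinh_sub_self).neg_left.congr_left fun a ↦ by ring

end Hyperbolic

section DiscreteWronskian

variable {𝕜 : Type*} [NontriviallyNormedField 𝕜] {f' g' v : 𝕜} {f g : 𝕜 → 𝕜}

/-- The finite-difference Wronskian `f(v + h) g(v) - f(v) g(v + h)`, which to first order in `h` is
`h` times the Wronskian of `f` and `g` at `v`. For `g = M` it is the denominator of `M̃(h)`. -/
def discreteWronskian (f g : 𝕜 → 𝕜) (v h : 𝕜) : 𝕜 :=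
  f (v + h) * g v - f v * g (v + h)

lemma hasDerivAt_discreteWronskian (hf : HasDerivAt f f' v) (hg : HasDerivAt g g' v) :
    HasDerivAt (discreteWronskian f g v) (f' * g v - f v * g') 0 := by
  have shift {k : 𝕜 → 𝕜} {k' : 𝕜} (hk : HasDerivAt k k' v) :
      HasDerivAt (fun h ↦ k (v + h)) k' 0 :=
    HasDerivAt.comp_const_add v 0 (by rwa [add_zero])
  exact ((shift hf).mul_const (g v)).sub ((shift hg).const_mul (f v))

lemma discreteWronskian_isTheta (hf : HasDerivAt f f' v) (hg : HasDerivAt g g' v)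
    (hne : f' * g v - f v * g' ≠ 0) :
    discreteWronskian f g v =Θ[𝓝 0] fun h ↦ h := by
  have at_zero : discreteWronskian f g v 0 = 0 := by simp [discreteWronskian]
  simpa [IsTheta, Function.comp_def, at_zero] using
    (hasDerivAt_discreteWronskian hf hg).isTheta_sub hne

end DiscreteWronskian

section Maxwellian

variable {n u T v h : ℝ} {f : ℝ → ℝ}

lemma maxw_pos (hn : 0 < n) (hT : 0 < T) (w : ℝ) : 0 < Maxw n u T w := by
  unfold Maxw
  positivity

lemma differentiable_maxw : Differentiable ℝ (Maxw n u T) := by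
  unfold Maxw
  fun_prop

/-- Half the logarithmic ratio of Maxwellian values, `log (M(v) / M(v + h)) / 2`, in closed form. -/
def halfLogRatio (u T v h : ℝ) : ℝ :=
  h * (v + h / 2 - u) / (2 * T)

/-- The ratio of the Maxwellian at the midpoint of an interval of length `h` to the geometric mean
of its values at the endpoints, in closed form. -/
def midpointFactor (T h : ℝ) : ℝ :=
  exp (h ^ 2 / (8 * T))

lemma maxw_midpoint_eq_left (n u T v h : ℝ) :
    Maxw n u T (v + h / 2) =
      Maxw n u T v * (midpointFactor T h * exp (-halfLogRatio u T v h)) := by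
  unfold Maxw midpointFactor halfLogRatio
  rw [mul_assoc (n / _), ← exp_add, ← exp_add]
  ring_nf

lemma maxw_midpoint_eq_right (n u T v h : ℝ) :
    Maxw n u T (v + h / 2) =
      Maxw n u T (v + h) * (midpointFactor T h * exp (halfLogRatio u T v h)) := by
  unfold Maxw midpointFactor halfLogRatio
  rw [mul_assoc (n / _), ← exp_add, ← exp_add]
  ring_nf

lemma discreteWronskian_mul_maxw_midpoint :
    discreteWronskian f (Maxw n u T) v h * Maxw n u T (v + h / 2) =
      Maxw n u T v * Maxw n u T (v + h) * (midpointFactor T h *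
        ((f (v + h) - f v) * cosh (halfLogRatio u T v h) +
          (f v + f (v + h)) * sinh (halfLogRatio u T v h))) := by
  rw [cosh_eq, sinh_eq, discreteWronskian]
  linear_combination
    f (v + h) * Maxw n u T v * maxw_midpoint_eq_right n u T v h -
      f v * Maxw n u T (v + h) * maxw_midpoint_eq_left n u T v h

lemma mtilde_eq_div :
    Mtilde n u T f v h =
      Maxw n u T v * Maxw n u T (v + h) *
        ((f (v + h) - f v) + (f v + f (v + h)) * halfLogRatio u T v h) /
          discreteWronskian f (Maxw n u T) v h := by
  unfold Mtilde halfLogRatio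
  rw [← add_div, discreteWronskian]
  ring

/-- The numerator of the consistency error `M̃(h) - M(v + h/2)` over the discrete Wronskian. -/
def consistencyNumerator (n u T : ℝ) (f : ℝ → ℝ) (v h : ℝ) : ℝ :=
  Maxw n u T v * Maxw n u T (v + h) *
    ((f (v + h) - f v) * (1 - midpointFactor T h * cosh (halfLogRatio u T v h)) +
      (f v + f (v + h)) *
        (halfLogRatio u T v h - midpointFactor T h * sinh (halfLogRatio u T v h)))

lemma mtilde_sub_maxw_midpoint (hW : discreteWronskian f (Maxw n u T) v h ≠ 0) :
    Mtilde n u T f v h - Maxw n u T (v + h / 2) =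
      consistencyNumerator n u T f v h / discreteWronskian f (Maxw n u T) v h := by
  rw [mtilde_eq_div, div_sub' hW, discreteWronskian_mul_maxw_midpoint, consistencyNumerator]
  ring

lemma halfLogRatio_isBigO : halfLogRatio u T v =O[𝓝 0] fun h ↦ h := by
  have slope_bounded : (fun h ↦ (v + h / 2 - u) / (2 * T)) =O[𝓝 0] fun _ ↦ (1 : ℝ) :=
    (Continuous.tendsto (by fun_prop) 0).isBigO_one ℝ
  refine ((isBigO_refl (fun h : ℝ ↦ h) (𝓝 0)).mul slope_bounded).congr (fun h ↦ ?_) mul_one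
  rw [halfLogRatio, mul_div_assoc]

lemma midpointFactor_sub_one_isBigO (T : ℝ) :
    (fun h ↦ midpointFactor T h - 1) =O[𝓝 0] fun h ↦ h ^ 2 := by
  have exponent_tendsto : Tendsto (fun h : ℝ ↦ h ^ 2 / (8 * T)) (𝓝 0) (𝓝 0) :=
    Continuous.tendsto' (by fun_prop) 0 0 (by simp)
  have exponent_isBigO : (fun h : ℝ ↦ h ^ 2 / (8 * T)) =O[𝓝 0] fun h ↦ h ^ 2 := by
    simpa only [div_eq_inv_mul] using isBigO_const_mul_self (8 * T)⁻¹ (fun h : ℝ ↦ h ^ 2) (𝓝 0)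
  have exp_sub_one : (fun x : ℝ ↦ exp x - 1) =O[𝓝 0] fun x ↦ x := by
    simpa using (Real.hasDerivAt_exp 0).isBigO_sub
  exact (exp_sub_one.comp_tendsto exponent_tendsto).trans exponent_isBigO

lemma consistencyNumerator_isBigO (hf : DifferentiableAt ℝ f v) :
    consistencyNumerator n u T f v =O[𝓝 0] fun h ↦ h ^ 3 := by
  have shift : Tendsto (fun h ↦ v + h) (𝓝 0) (𝓝 v) :=
    Continuous.tendsto' (by fun_prop) 0 v (add_zero v)
  have halfLogRatio_tendsto : Tendsto (halfLogRatio u T v) (𝓝 0) (𝓝 0) :=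
    halfLogRatio_isBigO.trans_tendsto tendsto_id
  have increment : (fun h ↦ f (v + h) - f v) =O[𝓝 0] fun h ↦ h := by
    simpa [Function.comp_def] using hf.hasDerivAt.isBigO_sub.comp_tendsto shift
  have sum_bounded : (fun h ↦ f v + f (v + h)) =O[𝓝 0] fun _ ↦ (1 : ℝ) :=
    ((hf.continuousAt.tendsto.comp shift).const_add (f v)).isBigO_one ℝ
  have weight_bounded :
      (fun h ↦ Maxw n u T v * Maxw n u T (v + h)) =O[𝓝 0] fun _ ↦ (1 : ℝ) :=
    (((differentiable_maxw v).continuousAt.tendsto.comp shift).const_mul _).isBigO_one ℝ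
  have cosh_term := increment.mul <| one_sub_mul_cosh_isBigO_sq halfLogRatio_tendsto
    halfLogRatio_isBigO (midpointFactor_sub_one_isBigO T)
  have sinh_term := sum_bounded.mul <| sub_mul_sinh_isBigO_pow_three halfLogRatio_tendsto
    halfLogRatio_isBigO (midpointFactor_sub_one_isBigO T)
  have bracket := (cosh_term.congr_right fun h ↦ (pow_succ' h 2).symm).add
    (sinh_term.congr_right fun h ↦ one_mul (h ^ 3))
  exact (weight_bounded.mul bracket).congr_right fun h ↦ one_mul (h ^ 3)

lemma eventually_discreteWronskian_maxw_ne_zero (hf : DifferentiableAt ℝ f v)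
    (hne : deriv f v * Maxw n u T v - f v * deriv (Maxw n u T) v ≠ 0) :
    ∀ᶠ h in 𝓝[≠] 0, discreteWronskian f (Maxw n u T) v h ≠ 0 :=
  (hasDerivAt_discreteWronskian hf.hasDerivAt (differentiable_maxw v).hasDerivAt).eventually_ne hne

theorem mtilde_sub_maxw_midpoint_isBigO (hf : DifferentiableAt ℝ f v)
    (hne : deriv f v * Maxw n u T v - f v * deriv (Maxw n u T) v ≠ 0) :
    (fun h ↦ Mtilde n u T f v h - Maxw n u T (v + h / 2)) =O[𝓝[≠] 0] fun h ↦ h ^ 2 := by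
  have wronskian_isTheta : discreteWronskian f (Maxw n u T) v =Θ[𝓝 0] fun h ↦ h :=
    discreteWronskian_isTheta hf.hasDerivAt (differentiable_maxw v).hasDerivAt hne
  have quotient_isBigO :
      (fun h ↦ consistencyNumerator n u T f v h / discreteWronskian f (Maxw n u T) v h)
        =O[𝓝[≠] 0] fun h ↦ h ^ 3 / h := by
    simpa only [div_eq_mul_inv] using
      ((consistencyNumerator_isBigO hf).mul wronskian_isTheta.inv.isBigO).mono nhdsWithin_le_nhds
  refine quotient_isBigO.congr' ?_ ?_
  · filter_upwards [eventually_discreteWronskian_maxw_ne_zero hf hne] with h hW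
    exact (mtilde_sub_maxw_midpoint hW).symm
  · filter_upwards [self_mem_nhdsWithin] with h (hh : h ≠ 0)
    field_simp

theorem tendsto_mtilde (hf : DifferentiableAt ℝ f v)
    (hne : deriv f v * Maxw n u T v - f v * deriv (Maxw n u T) v ≠ 0) :
    Tendsto (Mtilde n u T f v) (𝓝[≠] 0) (𝓝 (Maxw n u T v)) := by
  have error_tendsto :
      Tendsto (fun h ↦ Mtilde n u T f v h - Maxw n u T (v + h / 2)) (𝓝[≠] 0) (𝓝 0) := by
    refine (mtilde_sub_maxw_midpoint_isBigO hf hne).trans_tendsto ?_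
    exact (Continuous.tendsto' (by fun_prop) 0 0 (by simp)).mono_left nhdsWithin_le_nhds
  have midpoint_tendsto :
      Tendsto (fun h ↦ Maxw n u T (v + h / 2)) (𝓝[≠] 0) (𝓝 (Maxw n u T v)) := by
    have continuous_maxw : Continuous (Maxw n u T) := differentiable_maxw.continuous
    exact (Continuous.tendsto' (by fun_prop) 0 _ (by simp)).mono_left nhdsWithin_le_nhds
  simpa using error_tendsto.add midpoint_tendsto

end Maxwellian

lemma exists_pos_forall_of_eventually_nhdsGT {p : ℝ → Prop} (hp : ∀ᶠ h in 𝓝[>] 0, p h) :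
    ∃ δ > (0 : ℝ), ∀ h : ℝ, 0 < h → h < δ → p h := by
  obtain ⟨δ, hδ, hsub⟩ := mem_nhdsGT_iff_exists_Ioo_subset.mp hp
  exact ⟨δ, hδ, fun h h_pos h_lt ↦ hsub ⟨h_pos, h_lt⟩⟩

theorem stmt3_general (n u T : ℝ) (hn : 0 < n) (hT : 0 < T) (f : ℝ → ℝ) (v : ℝ)
    (hf : DifferentiableAt ℝ f v)
    (hne : deriv f v * Maxw n u T v - f v * deriv (Maxw n u T) v ≠ 0) :
    (∃ C > (0:ℝ), ∃ δ > (0:ℝ), ∀ h : ℝ, 0 < h → h < δ →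
        f (v + h) * Maxw n u T v - f v * Maxw n u T (v + h) ≠ 0 ∧
        |Mtilde n u T f v h - Maxw n u T (v + h / 2)| ≤ C * h ^ 2) ∧
    (∃ δ' > (0:ℝ), ∀ h : ℝ, 0 < h → h < δ' → 0 < Mtilde n u T f v h) := by
  constructor
  · obtain ⟨C, hC, error_le⟩ := (mtilde_sub_maxw_midpoint_isBigO hf hne).exists_pos
    refine ⟨C, hC, exists_pos_forall_of_eventually_nhdsGT (nhdsGT_le_nhdsNE 0 ?_)⟩
    filter_upwards [eventually_discreteWronskian_maxw_ne_zero hf hne, error_le.bound]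
      with h hW h_le
    exact ⟨hW, by simpa using h_le⟩
  · exact exists_pos_forall_of_eventually_nhdsGT <| nhdsGT_le_nhdsNE 0 <|
      (tendsto_mtilde hf hne).eventually_const_lt (maxw_pos hn hT v)

/-- Second-order consistency of the reconstructed half-grid Maxwellian weight:
`M̃(h) = M(v + h/2) + O(h²)`, and in particular `M̃(h) > 0` for small `h > 0`. -/
theorem stmt3 (n u T : ℝ) (hn : 0 < n) (hT : 0 < T) (f : ℝ → ℝ)
    (hf : ContDiff ℝ 2 f) (v : ℝ)
    (hne : deriv f v * Maxw n u T v - f v * deriv (Maxw n u T) v ≠ 0) :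
    (∃ C > (0:ℝ), ∃ δ > (0:ℝ), ∀ h : ℝ, 0 < h → h < δ →
        f (v + h) * Maxw n u T v - f v * Maxw n u T (v + h) ≠ 0 ∧
        |Mtilde n u T f v h - Maxw n u T (v + h / 2)| ≤ C * h ^ 2) ∧
    (∃ δ' > (0:ℝ), ∀ h : ℝ, 0 < h → h < δ' → 0 < Mtilde n u T f v h) :=
  stmt3_general n u T hn hT f v (hf.differentiable two_ne_zero v) hne

end
end

section
/- Let u, T ∈ ℝ, let f : ℝ → ℝ be six times continuously differentiable, let C₀ > 0, and fix v ∈ ℝ. Define the continuous Fokker–Planck operator Q(f)(w) = d/dw[(w − u)f(w) + T·f'(w)]. For h > 0 let ũ(h), T̃(h), ŭ(h), T̆(h) be real numbers with |ũ(h) − u| ≤ C₀h², |T̃(h) − T| ≤ C₀h², |ŭ(h) − u| ≤ C₀h⁴, |T̆(h) − T| ≤ C₀h⁴. Define f̆₊(h) = (−f(v−h) + 9f(v) + 9f(v+h) − f(v+2h))/16, f̆₋(h) = (−f(v−2h) + 9f(v−h) + 9f(v) − f(v+h))/16, Q̄⁽⁴⁾(h) = [(v + h/2 − ŭ(h))·f̆₊(h)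 − (v − h/2 − ŭ(h))·f̆₋(h)]/h + T̆(h)·(−f(v−2h) + 28f(v−h) − 54f(v) + 28f(v+h) − f(v+2h))/(24h²), and for w ∈ ℝ let Q₂(w; h) = [((f(w)+f(w+h))/2)(w + h/2 − ũ(h)) − ((f(w−h)+f(w))/2)(w − h/2 − ũ(h))]/h + T̃(h)·(f(w+h) − 2f(w) + f(w−h))/h². Set Q⁽⁴⁾(h) = Q̄⁽⁴⁾(h) − (1/24)·(Q₂(v+h; h) − 2Q₂(v; h) + Q₂(v−h; h)). Then there exist C > 0 and δ > 0 such that |Q⁽⁴⁾(h) − Q(f)(v)| ≤ C·h⁴ for all 0 < h < δ. -/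
noncomputable section

/-- The continuous Fokker–Planck operator `Q(f)(w) = d/dw[(w−u)f(w) + T f'(w)]`. -/
def Qcont (u T : ℝ) (f : ℝ → ℝ) (w : ℝ) : ℝ :=
  deriv (fun z => (z - u) * f z + T * deriv f z) w

/-- `f̆₊(h) = (−f(v−h) + 9f(v) + 9f(v+h) − f(v+2h))/16`. -/
def fbrevePlus (f : ℝ → ℝ) (v h : ℝ) : ℝ :=
  (-f (v - h) + 9 * f v + 9 * f (v + h) - f (v + 2 * h)) / 16

/-- `f̆₋(h) = (−f(v−2h) + 9f(v−h) + 9f(v) − f(v+h))/16`. -/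
def fbreveMinus (f : ℝ → ℝ) (v h : ℝ) : ℝ :=
  (-f (v - 2 * h) + 9 * f (v - h) + 9 * f v - f (v + h)) / 16

/-- The second-order discretization `Q₂(w; h)` with parameters `ũ, T̃`. -/
def Q2pt (ut Tt : ℝ) (f : ℝ → ℝ) (w h : ℝ) : ℝ :=
  (((f w + f (w + h)) / 2) * (w + h / 2 - ut)
      - ((f (w - h) + f w) / 2) * (w - h / 2 - ut)) / h
    + Tt * (f (w + h) - 2 * f w + f (w - h)) / h ^ 2

/-- The fourth-order finite-volume approximation `Q̄⁽⁴⁾(h)` with parameters `ŭ, T̆`. -/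
def Qbar4 (ub Tb : ℝ) (f : ℝ → ℝ) (v h : ℝ) : ℝ :=
  ((v + h / 2 - ub) * fbrevePlus f v h - (v - h / 2 - ub) * fbreveMinus f v h) / h
    + Tb * (-f (v - 2 * h) + 28 * f (v - h) - 54 * f v + 28 * f (v + h) - f (v + 2 * h))
        / (24 * h ^ 2)

/-- The fourth-order pointwise approximation `Q⁽⁴⁾(h)`. -/
def Q4 (ut Tt ub Tb : ℝ) (f : ℝ → ℝ) (v h : ℝ) : ℝ :=
  Qbar4 ub Tb f v h
    - (1 / 24) * (Q2pt ut Tt f (v + h) h - 2 * Q2pt ut Tt f v h + Q2pt ut Tt f (v - h) h)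

/-!
Up to `O(h ^ n)`, a finite-difference stencil depends on a `C ^ n` function only through the moments
of its weights of order less than `n`. Regrouping `Q4` by parameters, the cell-average correction
`-(1 / 24) δ²Q₂` turns the finite-volume scheme with the exact `u` and `T` into
`f - δ⁴f / 16 + (v - u) D₁f + T D₂f`, where `D₁` and `D₂` are the classical five-point
approximations of `f'` and `f''`, all fourth-order accurate. The errors of `ũ` and `T̃` enter `Q4`
only through that correction, multiplied by `μδ³f / h` and `δ⁴f / h ^ 2`, which are `O(h ^ 2)`, so
second-order accuracy of these two parameters is enough; the errors of `ŭ` and `T̆` are multiplied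
by bounded difference quotients.
-/

open Asymptotics Filter
open scoped Topology

section Stencil

variable {ι E : Type*} [Fintype ι] [NormedAddCommGroup E] [NormedSpace ℝ E]

/-- The finite-difference stencil with nodes `v + k i * h` and weights `c i`, applied to `f`. -/
def stencil (k c : ι → ℝ) (f : ℝ → E) (v h : ℝ) : E :=
  ∑ i, c i • f (v + k i * h)

/-- The `j`-th moment of a stencil; up to the factor `j!`, the coefficient with which the `j`-th
derivative enters the Taylor expansion of the stencil. -/
def stencilMoment (k c : ι → ℝ) (j : ℕ) : ℝ :=
  ∑ i, c i * k i ^ j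

/-- The stencil scaled by `h ^ (-m)`, as an approximation of an `m`-th derivative. It is `0` at
`h = 0` when `m ≠ 0`. -/
def stencilQuotient (m : ℕ) (k c : ι → ℝ) (f : ℝ → E) (v h : ℝ) : E :=
  (h ^ m)⁻¹ • stencil k c f v h

theorem sub_taylor_isBigO_pow {n : ℕ} {f : ℝ → E} (hf : ContDiff ℝ n f) (v : ℝ) :
    (fun s => f (v + s)
        - ∑ j ∈ Finset.range n, ((j.factorial : ℝ)⁻¹ * s ^ j) • iteratedDeriv j f v)
      =O[𝓝 0] fun s => s ^ n := by
  have shift : Tendsto (fun s : ℝ => v + s) (𝓝 0) (𝓝 v) := by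
    simpa using (continuous_const_add v).tendsto 0
  have remainder := ((taylor_isLittleO_univ (x₀ := v) hf).comp_tendsto shift).isBigO
  simp only [Function.comp_def, taylor_within_apply, Finset.sum_range_succ,
    iteratedDerivWithin_univ, add_sub_cancel_left] at remainder
  have last_term : (fun s : ℝ => ((n.factorial : ℝ)⁻¹ * s ^ n) • iteratedDeriv n f v)
      =O[𝓝 0] fun s => s ^ n := by
    simpa using ((isBigO_refl (fun s : ℝ => s ^ n) (𝓝 0)).const_mul_left _).smul
      (isBigO_const_const (iteratedDeriv n f v) (one_ne_zero (α := ℝ)) (𝓝 0))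
  refine (remainder.add last_term).congr_left fun s => ?_
  abel

theorem stencil_sub_taylor_isBigO_pow {n : ℕ} {f : ℝ → E} (hf : ContDiff ℝ n f)
    (k c : ι → ℝ) (v : ℝ) :
    (fun h => stencil k c f v h - ∑ j ∈ Finset.range n,
        ((j.factorial : ℝ)⁻¹ * stencilMoment k c j * h ^ j) • iteratedDeriv j f v)
      =O[𝓝 0] fun h => h ^ n := by
  have node (i : ι) : (fun h => c i • (f (v + k i * h) - ∑ j ∈ Finset.range n,
      ((j.factorial : ℝ)⁻¹ * (k i * h) ^ j) • iteratedDeriv j f v)) =O[𝓝 0] fun h => h ^ n := by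
    have scale : Tendsto (fun h : ℝ => k i * h) (𝓝 0) (𝓝 0) := by
      simpa using (continuous_const_mul (k i)).tendsto 0
    refine (((sub_taylor_isBigO_pow hf v).comp_tendsto scale).trans ?_).const_smul_left (c i)
    simp only [Function.comp_def, mul_pow]
    exact (isBigO_refl _ _).const_mul_left _
  refine (IsBigO.fun_sum (s := Finset.univ) fun i _ => node i).congr_left fun h => ?_
  simp only [stencil, stencilMoment, smul_sub, Finset.sum_sub_distrib, Finset.smul_sum,
    Finset.mul_sum, Finset.sum_mul, Finset.sum_smul, smul_smul]
  rw [Finset.sum_comm]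
  congr! 4
  ring

theorem inv_pow_smul_isBigO_pow {g : ℝ → E} {m p : ℕ} (hg : g =O[𝓝 0] fun h => h ^ (m + p)) :
    (fun h => (h ^ m)⁻¹ • g h) =O[𝓝[≠] 0] fun h => h ^ p := by
  refine ((isBigO_refl (fun h : ℝ => (h ^ m)⁻¹) _).smul
    (hg.mono nhdsWithin_le_nhds)).congr' .rfl ?_
  filter_upwards [self_mem_nhdsWithin] with h (hh : h ≠ 0)
  simp [pow_add, hh]

theorem stencilQuotient_isBigO_one {m : ℕ} {f : ℝ → E} (hf : ContDiff ℝ m f) {k c : ι → ℝ}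
    (hc : ∀ j < m, stencilMoment k c j = 0) (v : ℝ) :
    stencilQuotient m k c f v =O[𝓝[≠] 0] fun _ => (1 : ℝ) := by
  have expansion : stencil k c f v =O[𝓝 0] fun h => h ^ (m + 0) := by
    refine (stencil_sub_taylor_isBigO_pow hf k c v).congr_left fun h => ?_
    rw [Finset.sum_eq_zero, sub_zero]
    intro j hj
    simp [hc j (Finset.mem_range.1 hj)]
  exact (inv_pow_smul_isBigO_pow expansion).congr_right pow_zero

theorem stencilQuotient_sub_iteratedDeriv_isBigO_pow {m p : ℕ} (hp : 0 < p) {f : ℝ → E}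
    (hf : ContDiff ℝ (m + p : ℕ) f) {k c : ι → ℝ}
    (hc : ∀ j < m + p, stencilMoment k c j = if j = m then (m.factorial : ℝ) else 0) (v : ℝ) :
    (fun h => stencilQuotient m k c f v h - iteratedDeriv m f v) =O[𝓝[≠] 0] fun h => h ^ p := by
  have expansion : (fun h => stencil k c f v h - h ^ m • iteratedDeriv m f v)
      =O[𝓝 0] fun h => h ^ (m + p) := by
    refine (stencil_sub_taylor_isBigO_pow hf k c v).congr_left fun h => ?_
    rw [Finset.sum_eq_single_of_mem m (by simpa using hp), hc m (by lia), if_pos rfl,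
      inv_mul_cancel₀ (by positivity), one_mul]
    intro j hj hjm
    simp [hc j (Finset.mem_range.1 hj), hjm]
  refine (inv_pow_smul_isBigO_pow expansion).congr' ?_ .rfl
  filter_upwards [self_mem_nhdsWithin] with h (hh : h ≠ 0)
  rw [stencilQuotient, smul_sub, inv_smul_smul₀ (pow_ne_zero m hh)]

end Stencil

section FivePoint

/-- The offsets, in units of `h`, of the grid points `v - 2h, …, v + 2h`. -/
def fivePointNodes : Fin 5 → ℝ := ![-2, -1, 0, 1, 2]

/-- Weights of the fourth-order approximation of `f'`. -/
def firstDerivWeights : Fin 5 → ℝ := ![1 / 12, -2 / 3, 0, 2 / 3, -1 / 12]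

/-- Weights of the fourth-order approximation of `f''`. -/
def secondDerivWeights : Fin 5 → ℝ := ![-1 / 12, 4 / 3, -5 / 2, 4 / 3, -1 / 12]

/-- Weights of the averaged third central difference `μδ³`. -/
def thirdDiffWeights : Fin 5 → ℝ := ![-1 / 2, 1, 0, -1, 1 / 2]

/-- Weights of the fourth central difference `δ⁴`. -/
def fourthDiffWeights : Fin 5 → ℝ := ![1, -4, 6, -4, 1]

/-- Weights of `f̆₊ - f̆₋`, the factor of `-ŭ / h` in `Qbar4`. -/
def faceDiffWeights : Fin 5 → ℝ := ![1 / 16, -5 / 8, 0, 5 / 8, -1 / 16]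

/-- Weights of the diffusion stencil of `Qbar4`, the factor of `T̆ / h ^ 2`. -/
def faceDiffusionWeights : Fin 5 → ℝ := ![-1 / 24, 7 / 6, -9 / 4, 7 / 6, -1 / 24]

theorem stencil_fivePointNodes (a b c d e : ℝ) (f : ℝ → ℝ) (v h : ℝ) :
    stencil fivePointNodes ![a, b, c, d, e] f v h =
      a * f (v - 2 * h) + b * f (v - h) + c * f v + d * f (v + h) + e * f (v + 2 * h) := by
  simp [stencil, fivePointNodes, Fin.sum_univ_five, ← sub_eq_add_neg]

theorem stencilMoment_fivePointNodes (a b c d e : ℝ) (j : ℕ) :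
    stencilMoment fivePointNodes ![a, b, c, d, e] j =
      a * (-2) ^ j + b * (-1) ^ j + c * 0 ^ j + d + e * 2 ^ j := by
  simp [stencilMoment, fivePointNodes, Fin.sum_univ_five]

variable {f : ℝ → ℝ}

theorem firstDeriv_stencilQuotient_sub_isBigO (hf : ContDiff ℝ 5 f) (v : ℝ) :
    (fun h => stencilQuotient 1 fivePointNodes firstDerivWeights f v h - deriv f v)
      =O[𝓝[≠] 0] fun h => h ^ 4 := by
  rw [← iteratedDeriv_one]
  refine stencilQuotient_sub_iteratedDeriv_isBigO_pow (p := 4) (by simp) hf (fun j hj => ?_) v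
  rw [firstDerivWeights, stencilMoment_fivePointNodes]
  interval_cases j <;> norm_num

theorem secondDeriv_stencilQuotient_sub_isBigO (hf : ContDiff ℝ 6 f) (v : ℝ) :
    (fun h => stencilQuotient 2 fivePointNodes secondDerivWeights f v h - deriv (deriv f) v)
      =O[𝓝[≠] 0] fun h => h ^ 4 := by
  rw [show deriv (deriv f) = iteratedDeriv 2 f by rw [iteratedDeriv_succ, iteratedDeriv_one]]
  refine stencilQuotient_sub_iteratedDeriv_isBigO_pow (p := 4) (by simp) hf (fun j hj => ?_) v
  rw [secondDerivWeights, stencilMoment_fivePointNodes]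
  interval_cases j <;> norm_num

theorem thirdDiff_stencilQuotient_isBigO_one (hf : ContDiff ℝ 3 f) (v : ℝ) :
    stencilQuotient 3 fivePointNodes thirdDiffWeights f v =O[𝓝[≠] 0] fun _ => (1 : ℝ) := by
  refine stencilQuotient_isBigO_one hf (fun j hj => ?_) v
  rw [thirdDiffWeights, stencilMoment_fivePointNodes]
  interval_cases j <;> norm_num

theorem fourthDiff_stencilQuotient_isBigO_one (hf : ContDiff ℝ 4 f) (v : ℝ) :
    stencilQuotient 4 fivePointNodes fourthDiffWeights f v =O[𝓝[≠] 0] fun _ => (1 : ℝ) := by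
  refine stencilQuotient_isBigO_one hf (fun j hj => ?_) v
  rw [fourthDiffWeights, stencilMoment_fivePointNodes]
  interval_cases j <;> norm_num

theorem faceDiff_stencilQuotient_isBigO_one (hf : ContDiff ℝ 1 f) (v : ℝ) :
    stencilQuotient 1 fivePointNodes faceDiffWeights f v =O[𝓝[≠] 0] fun _ => (1 : ℝ) := by
  refine stencilQuotient_isBigO_one hf (fun j hj => ?_) v
  rw [faceDiffWeights, stencilMoment_fivePointNodes, Nat.lt_one_iff.1 hj]
  norm_num

theorem faceDiffusion_stencilQuotient_isBigO_one (hf : ContDiff ℝ 2 f) (v : ℝ) :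
    stencilQuotient 2 fivePointNodes faceDiffusionWeights f v =O[𝓝[≠] 0] fun _ => (1 : ℝ) := by
  refine stencilQuotient_isBigO_one hf (fun j hj => ?_) v
  rw [faceDiffusionWeights, stencilMoment_fivePointNodes]
  interval_cases j <;> norm_num

end FivePoint

section Consistency

theorem Qcont_eq (u T : ℝ) {f : ℝ → ℝ} {w : ℝ} (hf : DifferentiableAt ℝ f w)
    (hf' : DifferentiableAt ℝ (deriv f) w) :
    Qcont u T f w = f w + (w - u) * deriv f w + T * deriv (deriv f) w := by
  have flux_deriv : HasDerivAt (fun z => (z - u) * f z + T * deriv f z)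
      (1 * f w + (w - u) * deriv f w + T * deriv (deriv f) w) w :=
    (((hasDerivAt_id w).sub_const u).mul hf.hasDerivAt).add (hf'.hasDerivAt.const_mul T)
  rw [Qcont, flux_deriv.deriv, one_mul]

theorem Q4_eq_stencilQuotient (u T ut Tt ub Tb : ℝ) (f : ℝ → ℝ) (v : ℝ) {h : ℝ} (hh : h ≠ 0) :
    Q4 ut Tt ub Tb f v h =
      f v + (v - u) * stencilQuotient 1 fivePointNodes firstDerivWeights f v h
        + T * stencilQuotient 2 fivePointNodes secondDerivWeights f v h
        - 1 / 16 * (h ^ 4 * stencilQuotient 4 fivePointNodes fourthDiffWeights f v h)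
        + 1 / 24 * ((ut - u) * h ^ 2 * stencilQuotient 3 fivePointNodes thirdDiffWeights f v h)
        - 1 / 24 * ((Tt - T) * h ^ 2 * stencilQuotient 4 fivePointNodes fourthDiffWeights f v h)
        - (ub - u) * stencilQuotient 1 fivePointNodes faceDiffWeights f v h
        + (Tb - T) * stencilQuotient 2 fivePointNodes faceDiffusionWeights f v h := by
  have outer_right : v + h + h = v + 2 * h := by ring
  have outer_left : v - h - h = v - 2 * h := by ring
  simp only [Q4, Qbar4, Q2pt, fbrevePlus, fbreveMinus, outer_right, outer_left,
    add_sub_cancel_right, sub_add_cancel, stencilQuotient, stencil_fivePointNodes, smul_eq_mul,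
    firstDerivWeights, secondDerivWeights, thirdDiffWeights, fourthDiffWeights, faceDiffWeights,
    faceDiffusionWeights]
  field_simp
  ring

theorem Q4_sub_Qcont_isBigO {l : Filter ℝ} (hl : l ≤ 𝓝[≠] 0) {u T v : ℝ} {f : ℝ → ℝ}
    (hf : ContDiff ℝ 6 f) {ut Tt ub Tb : ℝ → ℝ}
    (hut : (fun h => ut h - u) =O[l] fun h => h ^ 2)
    (hTt : (fun h => Tt h - T) =O[l] fun h => h ^ 2)
    (hub : (fun h => ub h - u) =O[l] fun h => h ^ 4)
    (hTb : (fun h => Tb h - T) =O[l] fun h => h ^ 4) :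
    (fun h => Q4 (ut h) (Tt h) (ub h) (Tb h) f v h - Qcont u T f v) =O[l] fun h => h ^ 4 := by
  have mul_bounded {g q : ℝ → ℝ} (hg : g =O[l] fun h => h ^ 4)
      (hq : q =O[𝓝[≠] 0] fun _ => (1 : ℝ)) : (fun h => g h * q h) =O[l] fun h => h ^ 4 := by
    simpa only [mul_one] using hg.mul (hq.mono hl)
  have mul_sq {g : ℝ → ℝ} (hg : g =O[l] fun h => h ^ 2) :
      (fun h => g h * h ^ 2) =O[l] fun h => h ^ 4 := by
    refine (hg.mul (isBigO_refl (fun h => h ^ 2) l)).congr_right fun h => ?_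
    ring
  have fourthDiff_bounded :=
    fourthDiff_stencilQuotient_isBigO_one (hf.of_le (by norm_num)) v
  have transport :=
    ((firstDeriv_stencilQuotient_sub_isBigO (hf.of_le (by norm_num)) v).mono hl).const_mul_left
      (v - u)
  have diffusion :=
    ((secondDeriv_stencilQuotient_sub_isBigO hf v).mono hl).const_mul_left T
  have average := (mul_bounded (isBigO_refl _ l) fourthDiff_bounded).const_mul_left (1 / 16)
  have ut_error := (mul_bounded (mul_sq hut)
    (thirdDiff_stencilQuotient_isBigO_one (hf.of_le (by norm_num)) v)).const_mul_left (1 / 24)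
  have Tt_error := (mul_bounded (mul_sq hTt) fourthDiff_bounded).const_mul_left (1 / 24)
  have ub_error := mul_bounded hub
    (faceDiff_stencilQuotient_isBigO_one (hf.of_le (by norm_num)) v)
  have Tb_error := mul_bounded hTb
    (faceDiffusion_stencilQuotient_isBigO_one (hf.of_le (by norm_num)) v)
  refine ((((((transport.add diffusion).sub average).add ut_error).sub Tt_error).sub
    ub_error).add Tb_error).congr' ?_ .rfl
  filter_upwards [hl self_mem_nhdsWithin] with h (hh : h ≠ 0)
  rw [Q4_eq_stencilQuotient u T _ _ _ _ f v hh,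
    Qcont_eq u T (hf.differentiable (by norm_num) v)
      ((hf.of_le (by norm_num)).differentiable_deriv_two v)]
  ring

end Consistency

section OneSided

variable {g : ℝ → ℝ} {n : ℕ}

theorem isBigO_nhdsGT_pow_of_forall_pos {C : ℝ} (hg : ∀ h, 0 < h → |g h| ≤ C * h ^ n) :
    g =O[𝓝[>] 0] fun h => h ^ n := by
  refine .of_bound C ?_
  filter_upwards [self_mem_nhdsWithin] with h (hh : 0 < h)
  simpa [abs_of_pos hh] using hg h hh

theorem exists_forall_abs_le_of_isBigO_nhdsGT_pow (hg : g =O[𝓝[>] 0] fun h => h ^ n) :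
    ∃ C > 0, ∃ δ > 0, ∀ h, 0 < h → h < δ → |g h| ≤ C * h ^ n := by
  obtain ⟨C, hC, hbound⟩ := hg.exists_pos
  obtain ⟨δ, hδ, hsub⟩ := mem_nhdsGT_iff_exists_Ioo_subset.1 hbound.bound
  refine ⟨C, hC, δ, hδ, fun h hh hlt => ?_⟩
  simpa [abs_of_pos hh] using hsub ⟨hh, hlt⟩

end OneSided

/-- Fourth-order consistency of the fourth-order discretization of the
Fokker–Planck operator. -/
theorem stmt5 (u T C₀ v : ℝ) (hC₀ : 0 < C₀) (f : ℝ → ℝ) (hf : ContDiff ℝ 6 f)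
    (ut Tt ub Tb : ℝ → ℝ)
    (hut : ∀ h : ℝ, 0 < h → |ut h - u| ≤ C₀ * h ^ 2)
    (hTt : ∀ h : ℝ, 0 < h → |Tt h - T| ≤ C₀ * h ^ 2)
    (hub : ∀ h : ℝ, 0 < h → |ub h - u| ≤ C₀ * h ^ 4)
    (hTb : ∀ h : ℝ, 0 < h → |Tb h - T| ≤ C₀ * h ^ 4) :
    ∃ C > (0:ℝ), ∃ δ > (0:ℝ), ∀ h : ℝ, 0 < h → h < δ →
      |Q4 (ut h) (Tt h) (ub h) (Tb h) f v h - Qcont u T f v| ≤ C * h ^ 4 := by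
  apply exists_forall_abs_le_of_isBigO_nhdsGT_pow
  exact Q4_sub_Qcont_isBigO (nhdsWithin_mono 0 fun h (hh : 0 < h) => hh.ne') hf
    (isBigO_nhdsGT_pow_of_forall_pos hut) (isBigO_nhdsGT_pow_of_forall_pos hTt)
    (isBigO_nhdsGT_pow_of_forall_pos hub) (isBigO_nhdsGT_pow_of_forall_pos hTb)

end
end

section
/- Let Δv > 0 and let f : ℤ → ℝ be finitely supported. Define f̆_{j+1/2} = (−f_{j−1} + 9f_j + 9f_{j+1} − f_{j+2})/16, and let n, ũ, T̃, ŭ, T̆ ∈ ℝ satisfy n = Δv·∑_j f_j, n·ũ = Δv·∑_j v_{j+1/2} f_{j+1/2}, n·T̃ = Δv·∑_j (v_{j+1/2} − ũ)² f_{j+1/2}, n·ŭ = Δv·∑_j v_{j+1/2} f̆_{j+1/2}, and n·T̆ = Δv·∑_j (v_{j+1/2} − ŭ)² f̆_{j+1/2}. Define Q̄⁽⁴⁾_j = [(v_{j+1/2} − ŭ)f̆_{j+1/2} − (v_{j−1/2} − ŭ)f̆_{j−1/2}]/Δv + T̆·(−f_{j−2} + 28f_{j−1} − 54f_j + 28f_{j+1}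 − f_{j+2})/(24Δv²), and Q⁽⁴⁾_j = Q̄⁽⁴⁾_j − (1/24)(Q_{j+1} − 2Q_j + Q_{j−1}), where Q is the second-order discrete Fokker–Planck operator with parameters ũ, T̃. Then Δv·∑_{j∈ℤ} Q⁽⁴⁾_j = 0, Δv·∑_{j∈ℤ} v_j Q⁽⁴⁾_j = 0, and Δv·∑_{j∈ℤ} (v_j²/2) Q⁽⁴⁾_j = 0. -/
noncomputable section

/-- Fourth-order half-grid reconstruction
`f̆_{j+1/2} = (−f_{j−1} + 9f_j + 9f_{j+1} − f_{j+2})/16`. -/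
def fbreveHalf (f : ℤ → ℝ) (j : ℤ) : ℝ :=
  (-f (j - 1) + 9 * f j + 9 * f (j + 1) - f (j + 2)) / 16

/-- Fourth-order finite-volume approximation `Q̄⁽⁴⁾_j`. -/
def Qbar4d (Δv ub Tb : ℝ) (f : ℤ → ℝ) (j : ℤ) : ℝ :=
  ((vhalf Δv j - ub) * fbreveHalf f j - (vhalf Δv (j - 1) - ub) * fbreveHalf f (j - 1)) / Δv
    + Tb * (-f (j - 2) + 28 * f (j - 1) - 54 * f j + 28 * f (j + 1) - f (j + 2))
        / (24 * Δv ^ 2)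

/-- Fourth-order pointwise approximation
`Q⁽⁴⁾_j = Q̄⁽⁴⁾_j − (1/24)(Q_{j+1} − 2Q_j + Q_{j−1})`. -/
def Q4d (Δv ut Tt ub Tb : ℝ) (f : ℤ → ℝ) (j : ℤ) : ℝ :=
  Qbar4d Δv ub Tb f j
    - (1 / 24) * (Qdisc Δv ut Tt f (j + 1) - 2 * Qdisc Δv ut Tt f j + Qdisc Δv ut Tt f (j - 1))

/-!
`Q⁽⁴⁾` is a first difference of the drift flux `(v - ŭ) f̆` plus a second difference of a
potential of total mass `(T̆ / Δv²) ∑ f`. After summation by parts, the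
moment of `Q⁽⁴⁾` against `φ` involves only the first and second differences of `φ`. For `φ = 1` both
vanish. For `φ = v` only the mass of the drift flux is left, which is zero by the choice of `ŭ`.
For `φ = v² / 2` these differences are `Δv v_{j+1/2}` and `Δv²`, and the choice of `T̆` makes the
drift and diffusion contributions cancel. The second-order operator enters `Q⁽⁴⁾` only through a
second difference, so that it contributes a multiple of its own total mass, which is zero.
-/

section Difference

open Function

lemma hasFiniteSupport_comp_add_right {G M : Type*} [AddGroup G] [Zero M] {g : G → M}
    (hg : g.HasFiniteSupport) (k : G) : HasFiniteSupport fun j ↦ g (j + k) :=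
  hg.fun_comp_of_injective (add_left_injective k)

lemma hasFiniteSupport_comp_sub_right {G M : Type*} [AddGroup G] [Zero M] {g : G → M}
    (hg : g.HasFiniteSupport) (k : G) : HasFiniteSupport fun j ↦ g (j - k) :=
  hg.fun_comp_of_injective (sub_left_injective (b := k))

lemma summable_mul_of_hasFiniteSupport {ι S : Type*} [NonUnitalNonAssocSemiring S]
    [TopologicalSpace S] {g : ι → S} (hg : g.HasFiniteSupport) (p : ι → S) :
    Summable fun j ↦ p j * g j :=
  summable_of_hasFiniteSupport (hg.fun_mul_right p)

lemma tsum_mul_comp_sub_right {G S : Type*} [AddGroup G] [NonUnitalNonAssocSemiring S]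
    [TopologicalSpace S] (p g : G → S) (k : G) :
    ∑' j, p j * g (j - k) = ∑' j, p (j + k) * g j := by
  simpa using (Equiv.subRight k).tsum_eq fun j ↦ p (j + k) * g j

variable {R : Type*} [CommRing R]

/-- The central second difference `g_{j+1} - 2 g_j + g_{j-1}` of a two-sided sequence, not divided
by the square of the mesh size. -/
def secondDiff (g : ℤ → R) (j : ℤ) : R := g (j + 1) - 2 * g j + g (j - 1)

@[simp]
lemma secondDiff_const (c : R) (j : ℤ) : secondDiff (fun _ ↦ c) j = 0 := by
  simp only [secondDiff]
  ring

lemma hasFiniteSupport_secondDiff {g : ℤ → R} (hg : g.HasFiniteSupport) :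
    (secondDiff g).HasFiniteSupport :=
  ((hasFiniteSupport_comp_add_right hg 1).fun_sub (hg.fun_mul_right fun _ ↦ 2)).fun_add
    (hasFiniteSupport_comp_sub_right hg 1)

variable [TopologicalSpace R] [IsTopologicalAddGroup R] [T2Space R] {g : ℤ → R}

theorem tsum_mul_backwardDiff (hg : g.HasFiniteSupport) (p : ℤ → R) :
    ∑' j, p j * (g j - g (j - 1)) = -∑' j, (p (j + 1) - p j) * g j := by
  have hg_prev := hasFiniteSupport_comp_sub_right hg 1
  simp only [mul_sub, sub_mul]
  rw [(summable_mul_of_hasFiniteSupport hg p).tsum_sub (summable_mul_of_hasFiniteSupport hg_prev p),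
    (summable_mul_of_hasFiniteSupport hg _).tsum_sub (summable_mul_of_hasFiniteSupport hg p),
    tsum_mul_comp_sub_right, neg_sub]

theorem tsum_mul_secondDiff (hg : g.HasFiniteSupport) (p : ℤ → R) :
    ∑' j, p j * secondDiff g j = ∑' j, secondDiff p j * g j := by
  let Δg (j : ℤ) : R := g (j + 1) - g j
  have hΔg : Δg.HasFiniteSupport := (hasFiniteSupport_comp_add_right hg 1).fun_sub hg
  calc ∑' j, p j * secondDiff g j
    _ = ∑' j, p j * (Δg j - Δg (j - 1)) := by
      refine tsum_congr fun j ↦ ?_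
      simp only [Δg, secondDiff, sub_add_cancel]
      ring
    _ = -∑' j, (p (j + 1) - p j) * (g (j + 1) - g j) := tsum_mul_backwardDiff hΔg p
    _ = -∑' j, (p j - p (j - 1)) * (g j - g (j - 1)) := by
      simpa using
        (Equiv.addRight (1 : ℤ)).tsum_eq fun j ↦ (p j - p (j - 1)) * (g j - g (j - 1))
    _ = ∑' j, (p (j + 1) - p (j + 1 - 1) - (p j - p (j - 1))) * g j := by
      rw [tsum_mul_backwardDiff hg fun j ↦ p j - p (j - 1), neg_neg]
    _ = ∑' j, secondDiff p j * g j := by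
      refine tsum_congr fun j ↦ ?_
      rw [secondDiff, add_sub_cancel_right]
      ring

lemma tsum_backwardDiff (hg : g.HasFiniteSupport) : ∑' j, (g j - g (j - 1)) = 0 := by
  simpa using tsum_mul_backwardDiff hg fun _ ↦ 1

lemma tsum_secondDiff (hg : g.HasFiniteSupport) : ∑' j, secondDiff g j = 0 := by
  simpa using tsum_mul_secondDiff hg fun _ ↦ 1

end Difference

section Grid

variable (Δv : ℝ) (j : ℤ)

lemma vgrid_add_one : vgrid Δv (j + 1) = vgrid Δv j + Δv := by
  simp only [vgrid, Int.cast_add, Int.cast_one]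
  ring

lemma vgrid_sub_one : vgrid Δv (j - 1) = vgrid Δv j - Δv := by
  rw [eq_sub_iff_add_eq, ← vgrid_add_one, sub_add_cancel]

lemma vgrid_sq_half_add_one_sub :
    vgrid Δv (j + 1) ^ 2 / 2 - vgrid Δv j ^ 2 / 2 = Δv * vhalf Δv j := by
  rw [vhalf, vgrid_add_one]
  ring

lemma secondDiff_vgrid : secondDiff (vgrid Δv) j = 0 := by
  rw [secondDiff, vgrid_add_one, vgrid_sub_one]
  ring

lemma secondDiff_vgrid_sq_half : secondDiff (fun i ↦ vgrid Δv i ^ 2 / 2) j = Δv ^ 2 := by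
  rw [secondDiff, vgrid_add_one, vgrid_sub_one]
  ring

end Grid

section FokkerPlanck

open Function

variable {f : ℤ → ℝ}

lemma hasFiniteSupport_fhalf (hf : f.HasFiniteSupport) : (fhalf f).HasFiniteSupport :=
  (hf.fun_add (hasFiniteSupport_comp_add_right hf 1)).fun_comp (g := (· / 2)) (zero_div 2)

lemma tsum_fhalf (hf : f.HasFiniteSupport) : ∑' j, fhalf f j = ∑' j, f j := by
  have hf_next := hasFiniteSupport_comp_add_right hf 1
  have tsum_next : ∑' j, f (j + 1) = ∑' j, f j := (Equiv.addRight (1 : ℤ)).tsum_eq f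
  simp only [fhalf]
  rw [tsum_div_const, (summable_of_hasFiniteSupport hf).tsum_add
    (summable_of_hasFiniteSupport hf_next), tsum_next, add_self_div_two]

lemma fbreveHalf_eq_fhalf_sub (f : ℤ → ℝ) :
    fbreveHalf f = fun j ↦ fhalf f j - 1 / 8 * secondDiff (fhalf f) j := by
  ext j
  simp only [fbreveHalf, secondDiff, fhalf, sub_add_cancel, add_assoc, one_add_one_eq_two]
  ring

lemma hasFiniteSupport_fbreveHalf (hf : f.HasFiniteSupport) : (fbreveHalf f).HasFiniteSupport := by
  have hfhalf := hasFiniteSupport_fhalf hf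
  have hdiff := hasFiniteSupport_secondDiff hfhalf
  rw [fbreveHalf_eq_fhalf_sub]
  fun_prop

lemma tsum_fbreveHalf (hf : f.HasFiniteSupport) : ∑' j, fbreveHalf f j = ∑' j, f j := by
  have hfhalf := hasFiniteSupport_fhalf hf
  rw [fbreveHalf_eq_fhalf_sub, (summable_of_hasFiniteSupport hfhalf).tsum_sub
    (summable_mul_of_hasFiniteSupport (hasFiniteSupport_secondDiff hfhalf) _),
    tsum_mul_left, tsum_secondDiff hfhalf, tsum_fhalf hf, mul_zero, sub_zero]

variable (Δv ut Tt ub Tb : ℝ)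

lemma hasFiniteSupport_Qdisc (hf : f.HasFiniteSupport) :
    (Qdisc Δv ut Tt f).HasFiniteSupport := by
  have hflux : HasFiniteSupport fun j ↦ fhalf f j * (vhalf Δv j - ut) :=
    (hasFiniteSupport_fhalf hf).fun_mul_left _
  exact ((hflux.fun_sub (hasFiniteSupport_comp_sub_right hflux 1)).fun_mul_right _).fun_add
    ((hasFiniteSupport_secondDiff hf).fun_mul_right _)

lemma tsum_Qdisc (hf : f.HasFiniteSupport) : ∑' j, Qdisc Δv ut Tt f j = 0 := by
  let flux (j : ℤ) : ℝ := fhalf f j * (vhalf Δv j - ut)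
  have hflux : flux.HasFiniteSupport := (hasFiniteSupport_fhalf hf).fun_mul_left _
  calc ∑' j, Qdisc Δv ut Tt f j
    _ = ∑' j, (1 / Δv * (flux j - flux (j - 1)) + Tt / Δv ^ 2 * secondDiff f j) := rfl
    _ = 1 / Δv * ∑' j, (flux j - flux (j - 1)) + Tt / Δv ^ 2 * ∑' j, secondDiff f j := by
      rw [(summable_mul_of_hasFiniteSupport
          (hflux.fun_sub (hasFiniteSupport_comp_sub_right hflux 1)) _).tsum_add
        (summable_mul_of_hasFiniteSupport (hasFiniteSupport_secondDiff hf) _),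
        tsum_mul_left, tsum_mul_left]
    _ = 0 := by rw [tsum_backwardDiff hflux, tsum_secondDiff hf, mul_zero, mul_zero, add_zero]

/-- The fourth-order drift flux `(v_{j+1/2} - ŭ) f̆_{j+1/2}`; index `j` stands for the interface
`j + 1/2`, and the flux carries no factor `1 / Δv`. -/
def driftFlux (f : ℤ → ℝ) (j : ℤ) : ℝ := (vhalf Δv j - ub) * fbreveHalf f j

/-- The sequence whose second difference is the diffusive part of `Q⁽⁴⁾` together with its
correction by the second-order operator. The five-point stencil of `Q̄⁽⁴⁾` is the second
difference of `24 f - secondDiff f`. -/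
def diffusionPotential (f : ℤ → ℝ) (j : ℤ) : ℝ :=
  Tb / Δv ^ 2 * (f j - 1 / 24 * secondDiff f j) - 1 / 24 * Qdisc Δv ut Tt f j

lemma Q4d_eq_backwardDiff_add_secondDiff (f : ℤ → ℝ) (j : ℤ) :
    Q4d Δv ut Tt ub Tb f j =
      1 / Δv * (driftFlux Δv ub f j - driftFlux Δv ub f (j - 1)) +
        secondDiff (diffusionPotential Δv ut Tt Tb f) j := by
  have add_one_add_one : j + 1 + 1 = j + 2 := by ring
  have sub_one_sub_one : j - 1 - 1 = j - 2 := by ring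
  simp only [Q4d, Qbar4d, driftFlux, diffusionPotential, secondDiff, sub_add_cancel,
    add_sub_cancel_right, add_one_add_one, sub_one_sub_one]
  ring

lemma hasFiniteSupport_driftFlux (hf : f.HasFiniteSupport) :
    (driftFlux Δv ub f).HasFiniteSupport :=
  (hasFiniteSupport_fbreveHalf hf).fun_mul_right _

lemma hasFiniteSupport_diffusionPotential (hf : f.HasFiniteSupport) :
    (diffusionPotential Δv ut Tt Tb f).HasFiniteSupport := by
  have hdiff := hasFiniteSupport_secondDiff hf
  have hQ := hasFiniteSupport_Qdisc Δv ut Tt hf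
  unfold diffusionPotential
  fun_prop

lemma tsum_diffusionPotential (hf : f.HasFiniteSupport) :
    ∑' j, diffusionPotential Δv ut Tt Tb f j = Tb / Δv ^ 2 * ∑' j, f j := by
  have hdiff := hasFiniteSupport_secondDiff hf
  have hsum : HasFiniteSupport fun j ↦ f j - 1 / 24 * secondDiff f j := by fun_prop
  simp only [diffusionPotential]
  rw [(summable_mul_of_hasFiniteSupport hsum _).tsum_sub
      (summable_mul_of_hasFiniteSupport (hasFiniteSupport_Qdisc Δv ut Tt hf) _),
    tsum_mul_left, tsum_mul_left, tsum_Qdisc Δv ut Tt hf,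
    (summable_of_hasFiniteSupport hf).tsum_sub (summable_mul_of_hasFiniteSupport hdiff _),
    tsum_mul_left, tsum_secondDiff hf, mul_zero, sub_zero, sub_zero]

theorem tsum_mul_Q4d (hf : f.HasFiniteSupport) (φ : ℤ → ℝ) :
    ∑' j, φ j * Q4d Δv ut Tt ub Tb f j =
      -(1 / Δv * ∑' j, (φ (j + 1) - φ j) * driftFlux Δv ub f j) +
        ∑' j, secondDiff φ j * diffusionPotential Δv ut Tt Tb f j := by
  have hflux := hasFiniteSupport_driftFlux Δv ub hf
  have hpot := hasFiniteSupport_diffusionPotential Δv ut Tt Tb hf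
  have hflux_diff := hflux.fun_sub (hasFiniteSupport_comp_sub_right hflux 1)
  simp only [Q4d_eq_backwardDiff_add_secondDiff, mul_add, mul_left_comm (φ _) (1 / Δv)]
  rw [((summable_mul_of_hasFiniteSupport hflux_diff φ).mul_left _).tsum_add
      (summable_mul_of_hasFiniteSupport (hasFiniteSupport_secondDiff hpot) φ),
    tsum_mul_left, tsum_mul_backwardDiff hflux, tsum_mul_secondDiff hpot, mul_neg]

theorem tsum_Q4d (hf : f.HasFiniteSupport) : ∑' j, Q4d Δv ut Tt ub Tb f j = 0 := by
  simpa using tsum_mul_Q4d Δv ut Tt ub Tb hf fun _ ↦ 1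

variable {Δv}

theorem tsum_vgrid_mul_Q4d (hΔv : Δv ≠ 0) (hf : f.HasFiniteSupport) :
    ∑' j, vgrid Δv j * Q4d Δv ut Tt ub Tb f j = -∑' j, driftFlux Δv ub f j := by
  rw [tsum_mul_Q4d Δv ut Tt ub Tb hf (vgrid Δv)]
  simp only [vgrid_add_one, add_sub_cancel_left, secondDiff_vgrid, zero_mul, tsum_zero, add_zero]
  rw [tsum_mul_left, ← mul_assoc, one_div_mul_cancel hΔv, one_mul]

theorem tsum_vgrid_sq_half_mul_Q4d (hΔv : Δv ≠ 0) (hf : f.HasFiniteSupport) :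
    ∑' j, vgrid Δv j ^ 2 / 2 * Q4d Δv ut Tt ub Tb f j =
      Tb * ∑' j, f j - ∑' j, vhalf Δv j * driftFlux Δv ub f j := by
  rw [tsum_mul_Q4d Δv ut Tt ub Tb hf fun j ↦ vgrid Δv j ^ 2 / 2]
  simp only [vgrid_sq_half_add_one_sub, secondDiff_vgrid_sq_half, mul_assoc]
  rw [tsum_mul_left, tsum_mul_left, tsum_diffusionPotential Δv ut Tt Tb hf]
  field_simp
  ring

variable (Δv)

lemma tsum_driftFlux (hf : f.HasFiniteSupport) :
    ∑' j, driftFlux Δv ub f j = ∑' j, vhalf Δv j * fbreveHalf f j - ub * ∑' j, f j := by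
  have hfbreve := hasFiniteSupport_fbreveHalf hf
  simp only [driftFlux, sub_mul]
  rw [(summable_mul_of_hasFiniteSupport hfbreve _).tsum_sub
    (summable_mul_of_hasFiniteSupport hfbreve _), tsum_mul_left, tsum_fbreveHalf hf]

lemma tsum_vhalf_mul_driftFlux (hf : f.HasFiniteSupport) :
    ∑' j, vhalf Δv j * driftFlux Δv ub f j =
      ∑' j, (vhalf Δv j - ub) ^ 2 * fbreveHalf f j + ub * ∑' j, driftFlux Δv ub f j := by
  have hfbreve := hasFiniteSupport_fbreveHalf hf
  have hflux := hasFiniteSupport_driftFlux Δv ub hf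
  rw [← tsum_mul_left, ← (summable_mul_of_hasFiniteSupport hfbreve _).tsum_add
    (summable_mul_of_hasFiniteSupport hflux _)]
  refine tsum_congr fun j ↦ ?_
  rw [driftFlux]
  ring

end FokkerPlanck

theorem stmt6_general (Δv n ut Tt ub Tb : ℝ) (hΔv : Δv ≠ 0) (f : ℤ → ℝ)
    (hf : f.HasFiniteSupport)
    (hn : n = Δv * ∑' j : ℤ, f j)
    (hub : n * ub = Δv * ∑' j : ℤ, vhalf Δv j * fbreveHalf f j)
    (hTb : n * Tb = Δv * ∑' j : ℤ, (vhalf Δv j - ub) ^ 2 * fbreveHalf f j) :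
    Δv * ∑' j : ℤ, Q4d Δv ut Tt ub Tb f j = 0 ∧
    Δv * ∑' j : ℤ, vgrid Δv j * Q4d Δv ut Tt ub Tb f j = 0 ∧
    Δv * ∑' j : ℤ, (vgrid Δv j ^ 2 / 2) * Q4d Δv ut Tt ub Tb f j = 0 := by
  subst hn
  have drift_mass : ∑' j, driftFlux Δv ub f j = 0 := by
    rw [tsum_driftFlux Δv ub hf]
    exact mul_left_cancel₀ hΔv (by linarith)
  have drift_momentum : ∑' j, vhalf Δv j * driftFlux Δv ub f j = Tb * ∑' j, f j := by
    rw [tsum_vhalf_mul_driftFlux Δv ub hf, drift_mass, mul_zero, add_zero]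
    exact mul_left_cancel₀ hΔv (by linarith)
  refine ⟨?_, ?_, ?_⟩
  · rw [tsum_Q4d Δv ut Tt ub Tb hf, mul_zero]
  · rw [tsum_vgrid_mul_Q4d ut Tt ub Tb hΔv hf, drift_mass, neg_zero, mul_zero]
  · rw [tsum_vgrid_sq_half_mul_Q4d ut Tt ub Tb hΔv hf, drift_momentum, sub_self, mul_zero]

/-- Discrete conservation of mass, momentum and kinetic energy for the fourth-order
discretization of the Fokker–Planck operator. -/
theorem stmt6 (Δv n ut Tt ub Tb : ℝ) (hΔv : 0 < Δv) (f : ℤ → ℝ)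
    (hf : (Function.support f).Finite)
    (hn : n = Δv * ∑' j : ℤ, f j)
    (hut : n * ut = Δv * ∑' j : ℤ, vhalf Δv j * fhalf f j)
    (hTt : n * Tt = Δv * ∑' j : ℤ, (vhalf Δv j - ut) ^ 2 * fhalf f j)
    (hub : n * ub = Δv * ∑' j : ℤ, vhalf Δv j * fbreveHalf f j)
    (hTb : n * Tb = Δv * ∑' j : ℤ, (vhalf Δv j - ub) ^ 2 * fbreveHalf f j) :
    Δv * ∑' j : ℤ, Q4d Δv ut Tt ub Tb f j = 0 ∧
    Δv * ∑' j : ℤ, vgrid Δv j * Q4d Δv ut Tt ub Tb f j = 0 ∧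
    Δv * ∑' j : ℤ, (vgrid Δv j ^ 2 / 2) * Q4d Δv ut Tt ub Tb f j = 0 :=
  stmt6_general Δv n ut Tt ub Tb hΔv.ne' f hf hn hub hTb

end
end

section
/- Let Δv > 0, let f : ℤ → ℝ be finitely supported, and define the five-point discrete second-derivative operator (Df)_j = (−f_{j−2} + 28f_{j−1} − 54f_j + 28f_{j+1} − f_{j+2})/(24Δv²). Then Δv·∑_{j∈ℤ} (v_j²/2)·(Df)_j = Δv·∑_{j∈ℤ} f_j. -/
noncomputable section

/-- Five-point discrete second-derivative operator
`(Df)_j = (−f_{j−2} + 28f_{j−1} − 54f_j + 28f_{j+1} − f_{j+2})/(24Δv²)`. -/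
def D5 (Δv : ℝ) (f : ℤ → ℝ) (j : ℤ) : ℝ :=
  (-f (j - 2) + 28 * f (j - 1) - 54 * f j + 28 * f (j + 1) - f (j + 2)) / (24 * Δv ^ 2)

/-!
The stencil is even, so the operator is symmetric for the pairing `∑ φ_j f_j`, and it is exact on
quadratics: it sends `v² / 2` to `1`. Moving it from `f` onto `v² / 2` therefore leaves `∑ f_j`.
-/

lemma hasSum_mul_comp_sub_iff {G R : Type*} [AddGroup G] [NonUnitalNonAssocSemiring R]
    [TopologicalSpace R] {φ f : G → R} {a : R} (k : G) :
    HasSum (fun j ↦ φ j * f (j - k)) a ↔ HasSum (fun j ↦ φ (j + k) * f j) a := by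
  rw [← (Equiv.addRight k).hasSum_iff]
  simp only [Function.comp_def, Equiv.coe_addRight, add_sub_cancel_right]

lemma summable_intCast_add_pow_mul {f : ℤ → ℝ} {n : ℕ}
    (hf : Summable fun j : ℤ ↦ (j : ℝ) ^ n * f j) (c : ℝ) :
    Summable fun j : ℤ ↦ ((j : ℝ) + c) ^ n * f j := by
  refine .of_norm_bounded_eventually (hf.norm.mul_left ((1 + |c|) ^ n)) ?_
  filter_upwards [(Set.finite_singleton (0 : ℤ)).compl_mem_cofinite] with j hj
  have one_le_abs : (1 : ℝ) ≤ |(j : ℝ)| := mod_cast Int.one_le_abs hj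
  have abs_add_le_mul : |(j : ℝ) + c| ≤ (1 + |c|) * |(j : ℝ)| := calc
    |(j : ℝ) + c| ≤ |(j : ℝ)| + |c| * 1 := by simpa only [mul_one] using abs_add_le (j : ℝ) c
    _ ≤ |(j : ℝ)| + |c| * |(j : ℝ)| := by gcongr
    _ = (1 + |c|) * |(j : ℝ)| := by ring
  calc ‖((j : ℝ) + c) ^ n * f j‖ = |(j : ℝ) + c| ^ n * |f j| := by
        rw [Real.norm_eq_abs, abs_mul, abs_pow]
    _ ≤ ((1 + |c|) * |(j : ℝ)|) ^ n * |f j| := by gcongr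
    _ = (1 + |c|) ^ n * ‖(j : ℝ) ^ n * f j‖ := by
        rw [Real.norm_eq_abs, abs_mul, abs_pow, mul_pow, mul_assoc]

lemma hasSum_D5 {ι : Type*} {F : ℤ → ι → ℝ} {s : ℤ → ℝ} (hF : ∀ k, HasSum (F k) (s k))
    (Δv : ℝ) (k : ℤ) : HasSum (fun i ↦ D5 Δv (F · i) k) (D5 Δv s k) :=
  (((((hF (k - 2)).neg.add ((hF (k - 1)).mul_left 28)).sub ((hF k).mul_left 54)).add
    ((hF (k + 1)).mul_left 28)).sub (hF (k + 2))).div_const (24 * Δv ^ 2)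

lemma tsum_mul_D5 {φ f : ℤ → ℝ} (hφf : ∀ k, Summable fun j ↦ φ (j + k) * f j) (Δv : ℝ) :
    ∑' j, φ j * D5 Δv f j = ∑' j, D5 Δv φ j * f j := by
  have stencil_left (j : ℤ) : φ j * D5 Δv f j = D5 Δv (fun k ↦ φ j * f (j - k)) 0 := by
    simp only [D5, zero_sub, zero_add, sub_neg_eq_add, sub_zero]
    ring
  have stencil_right (j : ℤ) : D5 Δv φ j * f j = D5 Δv (fun k ↦ φ (j + k) * f j) 0 := by
    simp only [D5, zero_sub, zero_add, ← sub_eq_add_neg, add_zero]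
    ring
  have sum_left := hasSum_D5 (fun k ↦ (hasSum_mul_comp_sub_iff k).2 (hφf k).hasSum) Δv 0
  have sum_right := hasSum_D5 (fun k ↦ (hφf k).hasSum) Δv 0
  rw [tsum_congr stencil_left, tsum_congr stencil_right, sum_left.tsum_eq, sum_right.tsum_eq]

lemma D5_vgrid_sq_div_two {Δv : ℝ} (hΔv : Δv ≠ 0) (j : ℤ) :
    D5 Δv (fun i ↦ vgrid Δv i ^ 2 / 2) j = 1 := by
  simp only [D5, vgrid]
  push_cast
  field_simp
  ring

theorem stmt8_general {Δv : ℝ} (hΔv : Δv ≠ 0) {f : ℤ → ℝ}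
    (hf : Summable fun j : ℤ ↦ (j : ℝ) ^ 2 * f j) :
    Δv * ∑' j : ℤ, (vgrid Δv j ^ 2 / 2) * D5 Δv f j = Δv * ∑' j : ℤ, f j := by
  have summable_shift (k : ℤ) : Summable fun j ↦ vgrid Δv (j + k) ^ 2 / 2 * f j := by
    refine ((summable_intCast_add_pow_mul hf k).mul_left (Δv ^ 2 / 2)).congr fun j ↦ ?_
    rw [vgrid, Int.cast_add]
    ring
  rw [tsum_mul_D5 (φ := fun j ↦ vgrid Δv j ^ 2 / 2) summable_shift]
  simp only [D5_vgrid_sq_div_two hΔv, one_mul]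

/-- Discrete double integration by parts for the five-point second derivative:
`Δv·∑_j (v_j²/2)(Df)_j = Δv·∑_j f_j`. -/
theorem stmt8 (Δv : ℝ) (hΔv : 0 < Δv) (f : ℤ → ℝ)
    (hf : (Function.support f).Finite) :
    Δv * ∑' j : ℤ, (vgrid Δv j ^ 2 / 2) * D5 Δv f j = Δv * ∑' j : ℤ, f j :=
  stmt8_general hΔv.ne' <| summable_of_hasFiniteSupport <|
    hf.subset (Function.support_mul_subset_right _ f)

end
end

section
/- Let Δv > 0 and let Q be a map sending each finitely supported sequence g : ℤ → ℝ to a finitely supported sequence Q(g) : ℤ → ℝ such that for every g: ∑_{j∈ℤ} Q(g)_j = 0, ∑_{j∈ℤ} v_j Q(g)_j = 0, and ∑_{j∈ℤ} v_j² Q(g)_j = 0. Let s ≥ 2 be an integer, η ≥ 0, Δt ∈ ℝ, ω₀ = 1 + η/s², ω₂ = T_s'(ω₀)/T_s''(ω₀), and let b₀, b₁ be arbitrary nonzero reals and μ̂₁ an arbitrary real; for 2 ≤ ℓ ≤ s define b_ℓ = T_ℓ''(ω₀)/(T_ℓ'(ω₀))², a_ℓ = 1 − b_ℓT_ℓ(ω₀),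 μ̂_ℓ = 2b_ℓω₂/b_{ℓ−1}, ν̂_ℓ = 2b_ℓω₀/b_{ℓ−1}, κ̂_ℓ = −b_ℓ/b_{ℓ−2}, with T_k the k-th Chebyshev polynomial of the first kind. Given a finitely supported f⁰ : ℤ → ℝ, define the RKC2 stages by K⁽⁰⁾ = f⁰, K⁽¹⁾ = K⁽⁰⁾ + μ̂₁Δt·Q(K⁽⁰⁾), and K⁽ℓ⁾ = (1 − κ̂_ℓ − ν̂_ℓ)K⁽⁰⁾ + κ̂_ℓK⁽ℓ⁻²⁾ + ν̂_ℓK⁽ℓ⁻¹⁾ + μ̂_ℓΔt·Q(K⁽ℓ⁻¹⁾) − a_{ℓ−1}μ̂_ℓΔt·Q(K⁽⁰⁾) for 2 ≤ ℓ ≤ s, and set f¹ = K⁽ˢ⁾. Then ∑_{j∈ℤ} f¹_j = ∑_{j∈ℤ} f⁰_j, ∑_{j∈ℤ} v_j f¹_j = ∑_{j∈ℤ} v_j f⁰_j, and ∑_{j∈ℤ} (v_j²/2) f¹_j = ∑_{j∈ℤ} (v_j²/2) f⁰_j. -/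
noncomputable section

/-- Evaluation of the `k`-th Chebyshev polynomial of the first kind. -/
def chebT (k : ℕ) (x : ℝ) : ℝ := (Polynomial.Chebyshev.T ℝ k).eval x

/-- Evaluation of the first derivative of the `k`-th Chebyshev polynomial. -/
def chebT' (k : ℕ) (x : ℝ) : ℝ :=
  (Polynomial.derivative (Polynomial.Chebyshev.T ℝ k)).eval x

/-- Evaluation of the second derivative of the `k`-th Chebyshev polynomial. -/
def chebT'' (k : ℕ) (x : ℝ) : ℝ :=
  (Polynomial.derivative (Polynomial.derivative (Polynomial.Chebyshev.T ℝ k))).eval x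

/-!
A moment `∑ w_j g_j` is linear, so the finitely supported `g` on which it vanishes form a submodule
`L`. If `Q` sends finitely supported sequences into `L`, then every stage of the scheme stays in the
coset `K 0 + L`: the weights `(1 - κ - ν) + κ + ν` of the earlier stages sum to one, and all other
terms are multiples of values of `Q`.
-/

section Stages

variable {R M : Type*} [Ring R] [AddCommGroup M] [Module R M]

/-- The stages `K 0, …, K s` of one step of size `Δt` of the second-order Runge–Kutta–Chebyshev
scheme for `u' = Q u`, with arbitrary coefficients in place of the Chebyshev ones. The recurrence
is shifted by two with respect to the paper, so that no index is subtracted. -/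
structure IsRKC2Stages (Q : M → M) (s : ℕ) (Δt μ₁ : R) (a μ ν κ : ℕ → R) (K : ℕ → M) : Prop where
  stage_one : K 1 = K 0 + (μ₁ * Δt) • Q (K 0)
  stage_add_two : ∀ ℓ, ℓ + 2 ≤ s →
    K (ℓ + 2) = (1 - κ (ℓ + 2) - ν (ℓ + 2)) • K 0 + κ (ℓ + 2) • K ℓ + ν (ℓ + 2) • K (ℓ + 1)
      + (μ (ℓ + 2) * Δt) • Q (K (ℓ + 1)) - (a (ℓ + 1) * μ (ℓ + 2) * Δt) • Q (K 0)

variable {Q : M → M} {s : ℕ} {Δt μ₁ : R} {a μ ν κ : ℕ → R} {K : ℕ → M}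

theorem IsRKC2Stages.stage_add_two_sub (hK : IsRKC2Stages Q s Δt μ₁ a μ ν κ K) {ℓ : ℕ}
    (hℓ : ℓ + 2 ≤ s) :
    K (ℓ + 2) - K 0 = κ (ℓ + 2) • (K ℓ - K 0) + ν (ℓ + 2) • (K (ℓ + 1) - K 0)
      + (μ (ℓ + 2) * Δt) • Q (K (ℓ + 1)) - (a (ℓ + 1) * μ (ℓ + 2) * Δt) • Q (K 0) := by
  rw [hK.stage_add_two ℓ hℓ]
  simp only [sub_smul, one_smul, smul_sub]
  abel

theorem IsRKC2Stages.sub_mem (hK : IsRKC2Stages Q s Δt μ₁ a μ ν κ K) {L : Submodule R M}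
    (hQ : ∀ g, g - K 0 ∈ L → Q g ∈ L) : ∀ ℓ ≤ s, K ℓ - K 0 ∈ L := by
  have hQ₀ : Q (K 0) ∈ L := hQ _ (by simp)
  intro ℓ
  induction ℓ using Nat.twoStepInduction with
  | zero => simp
  | one =>
    intro _
    simpa [hK.stage_one] using L.smul_mem (μ₁ * Δt) hQ₀
  | more ℓ ih₀ ih₁ =>
    intro hℓ
    have h₀ : K ℓ - K 0 ∈ L := ih₀ (by lia)
    have h₁ : K (ℓ + 1) - K 0 ∈ L := ih₁ (by lia)
    rw [hK.stage_add_two_sub hℓ]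
    exact L.sub_mem (L.add_mem (L.add_mem (L.smul_mem _ h₀) (L.smul_mem _ h₁))
      (L.smul_mem _ (hQ _ h₁))) (L.smul_mem _ hQ₀)

end Stages

section Moments

open Function

variable {ι R : Type*} [CommRing R]

/-- The submodule of finitely supported families whose moment against the weight `w` vanishes.
The moment is a `finsum`, so that no topology on `R` is involved. -/
def nullMoment (w : ι → R) : Submodule R (ι → R) where
  carrier := {g | g.HasFiniteSupport ∧ ∑ᶠ j, w j * g j = 0}
  zero_mem' := by simp [HasFiniteSupport]
  add_mem' := by
    rintro f g ⟨hf, hf₀⟩ ⟨hg, hg₀⟩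
    refine ⟨hf.add hg, ?_⟩
    simp only [Pi.add_apply, mul_add]
    rw [finsum_add_distrib (hf.fun_mul_right w) (hg.fun_mul_right w), hf₀, hg₀, add_zero]
  smul_mem' := by
    rintro c g ⟨hg, hg₀⟩
    refine ⟨hg.smul_right fun _ ↦ c, ?_⟩
    simp only [Pi.smul_apply, smul_eq_mul, mul_left_comm _ c]
    rw [← mul_finsum' _ c (hg.fun_mul_right w), hg₀, mul_zero]

variable {w f g : ι → R}

theorem hasFiniteSupport_of_sub_mem_nullMoment (hf : f.HasFiniteSupport)
    (hgf : g - f ∈ nullMoment w) : g.HasFiniteSupport := by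
  simpa only [sub_add_cancel] using hgf.1.add hf

variable [TopologicalSpace R]

theorem mem_nullMoment_of_tsum_eq_zero (hg : g.HasFiniteSupport) (hw : ∑' j, w j * g j = 0) :
    g ∈ nullMoment w :=
  ⟨hg, (tsum_eq_finsum (hg.fun_mul_right w)).symm.trans hw⟩

theorem tsum_mul_eq_of_sub_mem_nullMoment (hf : f.HasFiniteSupport)
    (hgf : g - f ∈ nullMoment w) : ∑' j, w j * g j = ∑' j, w j * f j := by
  have hwf := hf.fun_mul_right w
  have hwg := (hasFiniteSupport_of_sub_mem_nullMoment hf hgf).fun_mul_right w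
  have hsub : ∑ᶠ j, (w j * g j - w j * f j) = 0 := by
    simpa only [Pi.sub_apply, mul_sub] using hgf.2
  rw [tsum_eq_finsum hwg, tsum_eq_finsum hwf, ← sub_eq_zero]
  exact (finsum_sub_distrib hwg hwf).symm.trans hsub

theorem stmt10_general (w : ι → R) {Q : (ι → R) → ι → R}
    (hQfin : ∀ g, g.HasFiniteSupport → (Q g).HasFiniteSupport)
    (hQw : ∀ g, g.HasFiniteSupport → ∑' j, w j * Q g j = 0)
    {s : ℕ} {Δt μ₁ : R} {a μ ν κ : ℕ → R} {K : ℕ → ι → R}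
    (hK : IsRKC2Stages Q s Δt μ₁ a μ ν κ K) (hK₀ : (K 0).HasFiniteSupport) :
    ∑' j, w j * K s j = ∑' j, w j * K 0 j := by
  have hQ (g : ι → R) (hg : g - K 0 ∈ nullMoment w) : Q g ∈ nullMoment w :=
    have hgfin := hasFiniteSupport_of_sub_mem_nullMoment hK₀ hg
    mem_nullMoment_of_tsum_eq_zero (hQfin g hgfin) (hQw g hgfin)
  exact tsum_mul_eq_of_sub_mem_nullMoment hK₀ (hK.sub_mem hQ s le_rfl)

end Moments

/-- One step of the second-order RKC method preserves the discrete mass, momentum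
and kinetic energy, provided the discretized collision operator `Q` does. -/
theorem stmt10 (Δv : ℝ) (hΔv : 0 < Δv)
    (Q : (ℤ → ℝ) → (ℤ → ℝ))
    (hQfin : ∀ g : ℤ → ℝ, (Function.support g).Finite → (Function.support (Q g)).Finite)
    (hQmass : ∀ g : ℤ → ℝ, (Function.support g).Finite → ∑' j : ℤ, Q g j = 0)
    (hQmom : ∀ g : ℤ → ℝ, (Function.support g).Finite →
      ∑' j : ℤ, vgrid Δv j * Q g j = 0)
    (hQen : ∀ g : ℤ → ℝ, (Function.support g).Finite →
      ∑' j : ℤ, vgrid Δv j ^ 2 * Q g j = 0)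
    (s : ℕ) (hs : 2 ≤ s) (η : ℝ) (hη : 0 ≤ η) (Δt : ℝ)
    (ω₀ ω₂ μh₁ : ℝ) (b a μh νh κh : ℕ → ℝ)
    (hω₀ : ω₀ = 1 + η / (s : ℝ) ^ 2)
    (hω₂ : ω₂ = chebT' s ω₀ / chebT'' s ω₀)
    (hb0 : b 0 ≠ 0) (hb1 : b 1 ≠ 0)
    (hb : ∀ ℓ : ℕ, 2 ≤ ℓ → ℓ ≤ s → b ℓ = chebT'' ℓ ω₀ / (chebT' ℓ ω₀) ^ 2)
    (ha1 : a 1 = 1 - b 1 * chebT 1 ω₀)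
    (ha : ∀ ℓ : ℕ, 2 ≤ ℓ → ℓ ≤ s → a ℓ = 1 - b ℓ * chebT ℓ ω₀)
    (hμh : ∀ ℓ : ℕ, 2 ≤ ℓ → ℓ ≤ s → μh ℓ = 2 * b ℓ * ω₂ / b (ℓ - 1))
    (hνh : ∀ ℓ : ℕ, 2 ≤ ℓ → ℓ ≤ s → νh ℓ = 2 * b ℓ * ω₀ / b (ℓ - 1))
    (hκh : ∀ ℓ : ℕ, 2 ≤ ℓ → ℓ ≤ s → κh ℓ = -(b ℓ / b (ℓ - 2)))
    (f0 : ℤ → ℝ) (hf0 : (Function.support f0).Finite)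
    (K : ℕ → ℤ → ℝ)
    (hK0 : K 0 = f0)
    (hK1 : ∀ j : ℤ, K 1 j = K 0 j + μh₁ * Δt * Q (K 0) j)
    (hKl : ∀ ℓ : ℕ, 2 ≤ ℓ → ℓ ≤ s → ∀ j : ℤ,
      K ℓ j = (1 - κh ℓ - νh ℓ) * K 0 j + κh ℓ * K (ℓ - 2) j + νh ℓ * K (ℓ - 1) j
        + μh ℓ * Δt * Q (K (ℓ - 1)) j - a (ℓ - 1) * μh ℓ * Δt * Q (K 0) j)
    (f1 : ℤ → ℝ) (hf1 : f1 = K s) :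
    (∑' j : ℤ, f1 j = ∑' j : ℤ, f0 j) ∧
    (∑' j : ℤ, vgrid Δv j * f1 j = ∑' j : ℤ, vgrid Δv j * f0 j) ∧
    (∑' j : ℤ, (vgrid Δv j ^ 2 / 2) * f1 j = ∑' j : ℤ, (vgrid Δv j ^ 2 / 2) * f0 j) := by
  subst hf1 hK0
  have moment_eq (w : ℤ → ℝ) hw := stmt10_general w hQfin hw
    ⟨funext hK1, fun ℓ hℓ ↦ funext (hKl (ℓ + 2) (by lia) hℓ)⟩ hf0
  exact ⟨by simpa using moment_eq 1 (by simpa [Function.HasFiniteSupport] using hQmass),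
    moment_eq _ hQmom,
    by simp only [div_mul_eq_mul_div, tsum_div_const, moment_eq _ hQen]⟩

end
end

section
/- Let Δv_x, Δv_y > 0, set v_{x,i} = i·Δv_x and v_{y,j} = j·Δv_y for i, j ∈ ℤ, and let f : ℤ × ℤ → ℝ be finitely supported. Write f_{i+1/2,j} = (f_{i+1,j} + f_{i,j})/2, f_{i,j+1/2} = (f_{i,j+1} + f_{i,j})/2, v_{x,i+1/2} = (v_{x,i} + v_{x,i+1})/2, v_{y,j+1/2} = (v_{y,j} + v_{y,j+1})/2. Let n, ũ_x, ũ_y, T̃ ∈ ℝ satisfy n = ∑_{i,j} f_{i,j}Δv_xΔv_y, n·ũ_x = ∑_{i,j} v_{x,i+1/2}f_{i+1/2,j}Δv_xΔv_y, n·ũ_y = ∑_{i,j} v_{y,j+1/2}f_{i,j+1/2}Δv_xΔv_y, and 2n·T̃ = ∑_{i,j} (v_{x,i+1/2} − ũ_x)²f_{i+1/2,j}Δv_xΔv_y + ∑_{i,j} (v_{y,j+1/2} − ũ_y)²f_{i,j+1/2}Δv_xΔv_y. Define Q_{i,j} = (1/Δv_x)[f_{i+1/2,j}(v_{x,i+1/2}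 − ũ_x) − f_{i−1/2,j}(v_{x,i−1/2} − ũ_x)] + (T̃/Δv_x²)(f_{i+1,j} − 2f_{i,j} + f_{i−1,j}) + (1/Δv_y)[f_{i,j+1/2}(v_{y,j+1/2} − ũ_y) − f_{i,j−1/2}(v_{y,j−1/2} − ũ_y)] + (T̃/Δv_y²)(f_{i,j+1} − 2f_{i,j} + f_{i,j−1}). Then ∑_{i,j} Q_{i,j}Δv_xΔv_y = 0, ∑_{i,j} v_{x,i}Q_{i,j}Δv_xΔv_y = 0, ∑_{i,j} v_{y,j}Q_{i,j}Δv_xΔv_y = 0, and ∑_{i,j} ((v_{x,i}² + v_{y,j}²)/2)·Q_{i,j}Δv_xΔv_y = 0. -/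
noncomputable section

/-- Grid points in the `x`-velocity direction: `v_{x,i} = i·Δv_x`. -/
def vgx (Δvx : ℝ) (i : ℤ) : ℝ := i * Δvx

/-- Grid points in the `y`-velocity direction: `v_{y,j} = j·Δv_y`. -/
def vgy (Δvy : ℝ) (j : ℤ) : ℝ := j * Δvy

/-- Half-grid point `v_{x,i+1/2}`. -/
def vgxh (Δvx : ℝ) (i : ℤ) : ℝ := (vgx Δvx i + vgx Δvx (i + 1)) / 2

/-- Half-grid point `v_{y,j+1/2}`. -/
def vgyh (Δvy : ℝ) (j : ℤ) : ℝ := (vgy Δvy j + vgy Δvy (j + 1)) / 2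

/-- Half-grid average `f_{i+1/2,j} = (f_{i+1,j} + f_{i,j})/2`. -/
def fhx (f : ℤ → ℤ → ℝ) (i j : ℤ) : ℝ := (f (i + 1) j + f i j) / 2

/-- Half-grid average `f_{i,j+1/2} = (f_{i,j+1} + f_{i,j})/2`. -/
def fhy (f : ℤ → ℤ → ℝ) (i j : ℤ) : ℝ := (f i (j + 1) + f i j) / 2

/-- Two-dimensional second-order discrete Fokker–Planck operator. -/
def Q2two (Δvx Δvy ux uy Tt : ℝ) (f : ℤ → ℤ → ℝ) (i j : ℤ) : ℝ :=
  (1 / Δvx) * (fhx f i j * (vgxh Δvx i - ux) - fhx f (i - 1) j * (vgxh Δvx (i - 1) - ux))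
    + (Tt / Δvx ^ 2) * (f (i + 1) j - 2 * f i j + f (i - 1) j)
    + (1 / Δvy) * (fhy f i j * (vgyh Δvy j - uy) - fhy f i (j - 1) * (vgyh Δvy (j - 1) - uy))
    + (Tt / Δvy ^ 2) * (f i (j + 1) - 2 * f i j + f i (j - 1))

/-!
The operator is a sum of one operator per velocity direction, and each of these is the backward
difference quotient of the flux `J = f_{1/2} (v_{1/2} - u) + T δf / δv` through the half-grid
points. Summation by parts therefore turns the moment of `Q` against a weight `φ` into minus the sum
of `(δφ / δv) J`. This vanishes for a weight that is constant along the direction; it is minus the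
sum of `J` for `φ = v`, and minus the sum of `v_{1/2} J` for `φ = v² / 2`, because
`δ(v² / 2) = v_{1/2} δv` holds exactly. By the defining relations of `u` and `T` the first
vanishes in each direction and the second after adding up the directions.
-/

open Function fwdDiff

section SummationByParts

lemma summable_mul_of_hasFiniteSupport_s15 {ι R : Type*} [NonUnitalNonAssocSemiring R]
    [TopologicalSpace R] (φ : ι → R) {F : ι → R} (hF : HasFiniteSupport F) :
    Summable fun p ↦ φ p * F p :=
  summable_of_hasFiniteSupport (hF.mul_right φ)

variable {G R : Type*} [AddCommGroup G] {F : G → R}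

lemma hasFiniteSupport_comp_add_right_s15 [Zero R] (hF : HasFiniteSupport F) (h : G) :
    HasFiniteSupport fun p ↦ F (p + h) :=
  hF.fun_comp_of_injective (add_left_injective h)

lemma hasFiniteSupport_fwdDiff [AddCommGroup R] (hF : HasFiniteSupport F) (h : G) :
    HasFiniteSupport (Δ_[h] F) :=
  (hasFiniteSupport_comp_add_right_s15 hF h).sub hF

theorem tsum_mul_fwdDiff [NonUnitalNonAssocRing R] [TopologicalSpace R] [IsTopologicalAddGroup R]
    [T2Space R] (φ : G → R) (hF : HasFiniteSupport F) (h : G) :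
    ∑' p, φ p * Δ_[h] F p = ∑' p, Δ_[-h] φ p * F p := by
  have shift : ∑' p, φ p * F (p + h) = ∑' p, φ (p + -h) * F p := by
    rw [← (Equiv.addRight h).tsum_eq fun p ↦ φ (p + -h) * F p]
    simp only [Equiv.coe_addRight, add_neg_cancel_right]
  have summable_weighted (ψ : G → R) : Summable fun p ↦ ψ p * F p :=
    summable_mul_of_hasFiniteSupport_s15 ψ hF
  calc ∑' p, φ p * Δ_[h] F p
      = ∑' p, φ p * F (p + h) - ∑' p, φ p * F p := by
        simp only [fwdDiff, mul_sub]
        exact (summable_mul_of_hasFiniteSupport_s15 φ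
          (hasFiniteSupport_comp_add_right_s15 hF h)).tsum_sub (summable_weighted φ)
    _ = ∑' p, Δ_[-h] φ p * F p := by
        simp only [shift, fwdDiff, sub_mul]
        exact ((summable_weighted fun p ↦ φ (p + -h)).tsum_sub (summable_weighted φ)).symm

end SummationByParts

section Directional

variable {G : Type*} [AddCommGroup G]

/-- The average of `g` over the endpoints of the edge from `p` to `p + h`; this is the value that
the scheme assigns to `g` at the half-grid point `p + h / 2`. -/
def edgeAvg (h : G) (g : G → ℝ) (p : G) : ℝ := (g p + g (p + h)) / 2

/-- The Fokker–Planck flux `f (v - u) + T ∂f/∂v` discretized on the edge from `p` to `p + h`, where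
`δ` is the increment of the velocity coordinate `v` along that edge. The grid is an arbitrary
abelian group, so that one definition serves every direction `h` of a multidimensional grid. -/
def edgeFlux (h : G) (δ u T : ℝ) (v f : G → ℝ) (p : G) : ℝ :=
  edgeAvg h f p * (edgeAvg h v p - u) + T / δ * Δ_[h] f p

/-- The part of the discrete Fokker–Planck operator that acts in the direction `h`: the difference
quotient at `p` of the fluxes through the two edges meeting there. -/
def directionalFokkerPlanck (h : G) (δ u T : ℝ) (v f : G → ℝ) (p : G) : ℝ :=
  (edgeFlux h δ u T v f p - edgeFlux h δ u T v f (p - h)) / δ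

variable {v f φ : G → ℝ} {δ : ℝ}

lemma hasFiniteSupport_edgeAvg (hf : HasFiniteSupport f) (h : G) :
    HasFiniteSupport (edgeAvg h f) :=
  (hf.add (hasFiniteSupport_comp_add_right_s15 hf h)).fun_comp (g := (· / 2)) (zero_div 2)

lemma hasFiniteSupport_edgeFlux (hf : HasFiniteSupport f) (h : G) (δ u T : ℝ) (v : G → ℝ) :
    HasFiniteSupport (edgeFlux h δ u T v f) :=
  ((hasFiniteSupport_edgeAvg hf h).mul_left _).add
    ((hasFiniteSupport_fwdDiff hf h).mul_right fun _ ↦ T / δ)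

lemma directionalFokkerPlanck_eq_fwdDiff_neg (h : G) (δ u T : ℝ) (v f : G → ℝ) (p : G) :
    directionalFokkerPlanck h δ u T v f p = -δ⁻¹ * Δ_[-h] (edgeFlux h δ u T v f) p := by
  rw [directionalFokkerPlanck, fwdDiff, ← sub_eq_add_neg]
  ring

lemma hasFiniteSupport_directionalFokkerPlanck (hf : HasFiniteSupport f) (h : G) (δ u T : ℝ)
    (v : G → ℝ) : HasFiniteSupport (directionalFokkerPlanck h δ u T v f) := by
  rw [funext (directionalFokkerPlanck_eq_fwdDiff_neg h δ u T v f)]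
  exact (hasFiniteSupport_fwdDiff (hasFiniteSupport_edgeFlux hf h δ u T v) (-h)).mul_right
    fun _ ↦ -δ⁻¹

lemma tsum_edgeAvg (hf : HasFiniteSupport f) (h : G) : ∑' p, edgeAvg h f p = ∑' p, f p := by
  have shift : ∑' p, f (p + h) = ∑' p, f p := (Equiv.addRight h).tsum_eq f
  simp only [edgeAvg]
  rw [tsum_div_const, (summable_of_hasFiniteSupport hf).tsum_add
    (summable_of_hasFiniteSupport (hasFiniteSupport_comp_add_right_s15 hf h)), shift]
  ring

lemma fwdDiff_neg_edgeAvg {h : G} (hv : ∀ p, Δ_[h] v p = δ) (p : G) :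
    Δ_[-h] (edgeAvg h v) p = -δ := by
  have forward : v (p + h) - v p = δ := hv p
  have backward : v p - v (p + -h) = δ := by simpa [fwdDiff] using hv (p + -h)
  simp only [fwdDiff, edgeAvg, neg_add_cancel_right]
  linarith

lemma tsum_mul_directionalFokkerPlanck (hf : HasFiniteSupport f) (h : G) (δ u T : ℝ)
    (v φ : G → ℝ) :
    ∑' p, φ p * directionalFokkerPlanck h δ u T v f p =
      -δ⁻¹ * ∑' p, Δ_[h] φ p * edgeFlux h δ u T v f p := by
  have by_parts := tsum_mul_fwdDiff φ (hasFiniteSupport_edgeFlux hf h δ u T v) (-h)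
  rw [neg_neg] at by_parts
  simp only [directionalFokkerPlanck_eq_fwdDiff_neg, mul_left_comm (φ _), tsum_mul_left, by_parts]

lemma tsum_edgeAvg_sub_mul_edgeAvg (hf : HasFiniteSupport f) (h : G) (u : ℝ) (v : G → ℝ) :
    ∑' p, (edgeAvg h v p - u) * edgeAvg h f p =
      ∑' p, edgeAvg h v p * edgeAvg h f p - u * ∑' p, f p := by
  have havg := hasFiniteSupport_edgeAvg hf h
  simp only [sub_mul]
  rw [(summable_mul_of_hasFiniteSupport_s15 _ havg).tsum_sub
    (summable_mul_of_hasFiniteSupport_s15 (fun _ ↦ u) havg), tsum_mul_left, tsum_edgeAvg hf]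

lemma tsum_mul_edgeFlux (hf : HasFiniteSupport f) (h : G) (δ u T : ℝ) (v φ : G → ℝ) :
    ∑' p, φ p * edgeFlux h δ u T v f p =
      ∑' p, φ p * (edgeAvg h v p - u) * edgeAvg h f p + T / δ * ∑' p, Δ_[-h] φ p * f p := by
  have drift := summable_mul_of_hasFiniteSupport_s15 (fun p ↦ φ p * (edgeAvg h v p - u))
    (hasFiniteSupport_edgeAvg hf h)
  have diffusion := (summable_mul_of_hasFiniteSupport_s15 φ (hasFiniteSupport_fwdDiff hf h)).mul_left
    (T / δ)
  rw [← tsum_mul_fwdDiff φ hf, ← tsum_mul_left, ← drift.tsum_add diffusion]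
  refine tsum_congr fun p ↦ ?_
  rw [edgeFlux]
  ring

lemma tsum_edgeFlux (hf : HasFiniteSupport f) (h : G) (δ u T : ℝ) (v : G → ℝ) :
    ∑' p, edgeFlux h δ u T v f p = ∑' p, edgeAvg h v p * edgeAvg h f p - u * ∑' p, f p := by
  simpa [tsum_edgeAvg_sub_mul_edgeAvg hf] using tsum_mul_edgeFlux hf h δ u T v fun _ ↦ 1

lemma tsum_edgeAvg_mul_edgeFlux (hf : HasFiniteSupport f) {h : G} (hδ : δ ≠ 0)
    (hv : ∀ p, Δ_[h] v p = δ) (u T : ℝ) :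
    ∑' p, edgeAvg h v p * edgeFlux h δ u T v f p =
      ∑' p, (edgeAvg h v p - u) ^ 2 * edgeAvg h f p +
        u * (∑' p, edgeAvg h v p * edgeAvg h f p - u * ∑' p, f p) - T * ∑' p, f p := by
  have havg := hasFiniteSupport_edgeAvg hf h
  have drift : ∑' p, edgeAvg h v p * (edgeAvg h v p - u) * edgeAvg h f p =
      ∑' p, (edgeAvg h v p - u) ^ 2 * edgeAvg h f p +
        u * ∑' p, (edgeAvg h v p - u) * edgeAvg h f p := by
    rw [← tsum_mul_left, ← (summable_mul_of_hasFiniteSupport_s15 _ havg).tsum_add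
      ((summable_mul_of_hasFiniteSupport_s15 _ havg).mul_left u)]
    exact tsum_congr fun p ↦ by ring
  rw [tsum_mul_edgeFlux hf, drift, tsum_edgeAvg_sub_mul_edgeAvg hf]
  simp only [fwdDiff_neg_edgeAvg hv, tsum_mul_left]
  field_simp
  ring

theorem tsum_mul_directionalFokkerPlanck_of_fwdDiff_eq_zero (hf : HasFiniteSupport f) {h : G}
    (hφ : ∀ p, Δ_[h] φ p = 0) (δ u T : ℝ) (v : G → ℝ) :
    ∑' p, φ p * directionalFokkerPlanck h δ u T v f p = 0 := by
  simp [tsum_mul_directionalFokkerPlanck hf, hφ]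

theorem tsum_mul_directionalFokkerPlanck_of_fwdDiff_eq_step (hf : HasFiniteSupport f) {h : G}
    (hδ : δ ≠ 0) (hφ : ∀ p, Δ_[h] φ p = δ) (u T : ℝ) (v : G → ℝ) :
    ∑' p, φ p * directionalFokkerPlanck h δ u T v f p =
      u * ∑' p, f p - ∑' p, edgeAvg h v p * edgeAvg h f p := by
  rw [tsum_mul_directionalFokkerPlanck hf]
  simp only [hφ, tsum_mul_left, tsum_edgeFlux hf]
  field_simp
  ring

theorem tsum_mul_directionalFokkerPlanck_of_fwdDiff_eq_step_mul_edgeAvg (hf : HasFiniteSupport f)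
    {h : G} (hδ : δ ≠ 0) (hv : ∀ p, Δ_[h] v p = δ)
    (hφ : ∀ p, Δ_[h] φ p = δ * edgeAvg h v p) (u T : ℝ) :
    ∑' p, φ p * directionalFokkerPlanck h δ u T v f p =
      T * ∑' p, f p - ∑' p, (edgeAvg h v p - u) ^ 2 * edgeAvg h f p +
        u * (u * ∑' p, f p - ∑' p, edgeAvg h v p * edgeAvg h f p) := by
  rw [tsum_mul_directionalFokkerPlanck hf]
  simp only [hφ, mul_assoc, tsum_mul_left, tsum_edgeAvg_mul_edgeFlux hf hδ hv]
  field_simp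
  ring

end Directional

section PlaneGrid

lemma vgxh_eq_edgeAvg (Δvx : ℝ) (p : ℤ × ℤ) :
    vgxh Δvx p.1 = edgeAvg (1, 0) (fun q ↦ vgx Δvx q.1) p := rfl

lemma vgyh_eq_edgeAvg (Δvy : ℝ) (p : ℤ × ℤ) :
    vgyh Δvy p.2 = edgeAvg (0, 1) (fun q ↦ vgy Δvy q.2) p := rfl

lemma fhx_eq_edgeAvg (f : ℤ → ℤ → ℝ) (p : ℤ × ℤ) :
    fhx f p.1 p.2 = edgeAvg (1, 0) (fun q ↦ f q.1 q.2) p := by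
  simp [fhx, edgeAvg, add_comm]

lemma fhy_eq_edgeAvg (f : ℤ → ℤ → ℝ) (p : ℤ × ℤ) :
    fhy f p.1 p.2 = edgeAvg (0, 1) (fun q ↦ f q.1 q.2) p := by
  simp [fhy, edgeAvg, add_comm]

lemma fwdDiff_vgx (Δvx : ℝ) (p : ℤ × ℤ) : Δ_[(1, 0)] (fun q : ℤ × ℤ ↦ vgx Δvx q.1) p = Δvx := by
  simp [fwdDiff, vgx, add_mul]

lemma fwdDiff_vgy (Δvy : ℝ) (p : ℤ × ℤ) : Δ_[(0, 1)] (fun q : ℤ × ℤ ↦ vgy Δvy q.2) p = Δvy := by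
  simp [fwdDiff, vgy, add_mul]

lemma fwdDiff_kineticEnergy_x (Δvx Δvy : ℝ) (p : ℤ × ℤ) :
    Δ_[(1, 0)] (fun q : ℤ × ℤ ↦ (vgx Δvx q.1 ^ 2 + vgy Δvy q.2 ^ 2) / 2) p =
      Δvx * edgeAvg (1, 0) (fun q ↦ vgx Δvx q.1) p := by
  simp only [fwdDiff, edgeAvg, vgx, Prod.fst_add, Prod.snd_add, add_zero, Int.cast_add,
    Int.cast_one]
  ring

lemma fwdDiff_kineticEnergy_y (Δvx Δvy : ℝ) (p : ℤ × ℤ) :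
    Δ_[(0, 1)] (fun q : ℤ × ℤ ↦ (vgx Δvx q.1 ^ 2 + vgy Δvy q.2 ^ 2) / 2) p =
      Δvy * edgeAvg (0, 1) (fun q ↦ vgy Δvy q.2) p := by
  simp only [fwdDiff, edgeAvg, vgy, Prod.fst_add, Prod.snd_add, add_zero, Int.cast_add,
    Int.cast_one]
  ring

lemma Q2two_eq_add_directionalFokkerPlanck (Δvx Δvy ux uy Tt : ℝ) (f : ℤ → ℤ → ℝ) (p : ℤ × ℤ) :
    Q2two Δvx Δvy ux uy Tt f p.1 p.2 =
      directionalFokkerPlanck (1, 0) Δvx ux Tt (fun q ↦ vgx Δvx q.1) (fun q ↦ f q.1 q.2) p +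
        directionalFokkerPlanck (0, 1) Δvy uy Tt (fun q ↦ vgy Δvy q.2) (fun q ↦ f q.1 q.2) p := by
  simp only [Q2two, directionalFokkerPlanck, edgeFlux, fwdDiff, edgeAvg, fhx, fhy, vgxh, vgyh,
    Prod.fst_add, Prod.snd_add, Prod.fst_sub, Prod.snd_sub, add_zero, sub_zero, sub_add_cancel]
  ring

lemma tsum_mul_Q2two (Δvx Δvy ux uy Tt : ℝ) {f : ℤ → ℤ → ℝ}
    (hf : HasFiniteSupport fun p : ℤ × ℤ ↦ f p.1 p.2) (φ : ℤ × ℤ → ℝ) :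
    ∑' p : ℤ × ℤ, φ p * Q2two Δvx Δvy ux uy Tt f p.1 p.2 =
      ∑' p, φ p *
          directionalFokkerPlanck (1, 0) Δvx ux Tt (fun q ↦ vgx Δvx q.1) (fun q ↦ f q.1 q.2) p +
        ∑' p, φ p *
          directionalFokkerPlanck (0, 1) Δvy uy Tt (fun q ↦ vgy Δvy q.2) (fun q ↦ f q.1 q.2) p := by
  simp only [Q2two_eq_add_directionalFokkerPlanck, mul_add]
  exact (summable_mul_of_hasFiniteSupport_s15 φ
    (hasFiniteSupport_directionalFokkerPlanck hf ..)).tsum_add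
      (summable_mul_of_hasFiniteSupport_s15 φ (hasFiniteSupport_directionalFokkerPlanck hf ..))

lemma tsum_Q2two (Δvx Δvy ux uy Tt : ℝ) {f : ℤ → ℤ → ℝ}
    (hf : HasFiniteSupport fun p : ℤ × ℤ ↦ f p.1 p.2) :
    ∑' p : ℤ × ℤ, Q2two Δvx Δvy ux uy Tt f p.1 p.2 = 0 := by
  have mass := tsum_mul_Q2two Δvx Δvy ux uy Tt hf fun _ ↦ 1
  rw [tsum_mul_directionalFokkerPlanck_of_fwdDiff_eq_zero hf (by simp),
    tsum_mul_directionalFokkerPlanck_of_fwdDiff_eq_zero hf (by simp)] at mass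
  simpa only [one_mul, add_zero] using mass

end PlaneGrid

/-- Conservation of mass, both momentum components and kinetic energy for the
two-dimensional second-order discretization of the Fokker–Planck operator. -/
theorem stmt15 (Δvx Δvy n ux uy Tt : ℝ) (hΔvx : 0 < Δvx) (hΔvy : 0 < Δvy)
    (f : ℤ → ℤ → ℝ)
    (hf : (Function.support fun p : ℤ × ℤ => f p.1 p.2).Finite)
    (hn : n = ∑' p : ℤ × ℤ, f p.1 p.2 * Δvx * Δvy)
    (hux : n * ux = ∑' p : ℤ × ℤ, vgxh Δvx p.1 * fhx f p.1 p.2 * Δvx * Δvy)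
    (huy : n * uy = ∑' p : ℤ × ℤ, vgyh Δvy p.2 * fhy f p.1 p.2 * Δvx * Δvy)
    (hT : 2 * n * Tt = (∑' p : ℤ × ℤ, (vgxh Δvx p.1 - ux) ^ 2 * fhx f p.1 p.2 * Δvx * Δvy)
        + ∑' p : ℤ × ℤ, (vgyh Δvy p.2 - uy) ^ 2 * fhy f p.1 p.2 * Δvx * Δvy) :
    (∑' p : ℤ × ℤ, Q2two Δvx Δvy ux uy Tt f p.1 p.2 * Δvx * Δvy = 0) ∧
    (∑' p : ℤ × ℤ, vgx Δvx p.1 * Q2two Δvx Δvy ux uy Tt f p.1 p.2 * Δvx * Δvy = 0) ∧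
    (∑' p : ℤ × ℤ, vgy Δvy p.2 * Q2two Δvx Δvy ux uy Tt f p.1 p.2 * Δvx * Δvy = 0) ∧
    (∑' p : ℤ × ℤ, ((vgx Δvx p.1 ^ 2 + vgy Δvy p.2 ^ 2) / 2)
        * Q2two Δvx Δvy ux uy Tt f p.1 p.2 * Δvx * Δvy = 0) := by
  have hx := hΔvx.ne'
  have hy := hΔvy.ne'
  simp only [tsum_mul_right, vgxh_eq_edgeAvg, vgyh_eq_edgeAvg, fhx_eq_edgeAvg, fhy_eq_edgeAvg]
    at hn hux huy hT ⊢
  refine ⟨?_, ?_, ?_, ?_⟩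
  · rw [tsum_Q2two Δvx Δvy ux uy Tt hf, zero_mul, zero_mul]
  · rw [tsum_mul_Q2two Δvx Δvy ux uy Tt hf fun p ↦ vgx Δvx p.1,
      tsum_mul_directionalFokkerPlanck_of_fwdDiff_eq_step hf hx (fwdDiff_vgx Δvx),
      tsum_mul_directionalFokkerPlanck_of_fwdDiff_eq_zero hf (by simp [fwdDiff])]
    linear_combination hux - ux * hn
  · rw [tsum_mul_Q2two Δvx Δvy ux uy Tt hf fun p ↦ vgy Δvy p.2,
      tsum_mul_directionalFokkerPlanck_of_fwdDiff_eq_zero hf (by simp [fwdDiff]),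
      tsum_mul_directionalFokkerPlanck_of_fwdDiff_eq_step hf hy (fwdDiff_vgy Δvy)]
    linear_combination huy - uy * hn
  · rw [tsum_mul_Q2two Δvx Δvy ux uy Tt hf fun p ↦ (vgx Δvx p.1 ^ 2 + vgy Δvy p.2 ^ 2) / 2,
      tsum_mul_directionalFokkerPlanck_of_fwdDiff_eq_step_mul_edgeAvg hf hx (fwdDiff_vgx Δvx)
        (fwdDiff_kineticEnergy_x Δvx Δvy),
      tsum_mul_directionalFokkerPlanck_of_fwdDiff_eq_step_mul_edgeAvg hf hy (fwdDiff_vgy Δvy)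
        (fwdDiff_kineticEnergy_y Δvx Δvy)]
    linear_combination hT - 2 * Tt * hn + ux * (hux - ux * hn) + uy * (huy - uy * hn)

end
end

section
/- Let g : ℝ → ℝ be five times continuously differentiable and fix v ∈ ℝ. Then there exist constants C > 0 and δ > 0 such that for all 0 < h < δ, |(g(v − h) − 27g(v) + 27g(v + h) − g(v + 2h))/(24h) − g'(v + h/2)| ≤ C·h⁴. -/
/-!
Expand every sample `g (v + h * c i)` and the target derivative `g⁽ᵐ⁾ (v + h * d)` in Taylor series
about the common base point `v`. If the weights reproduce the `m`-th derivative of all monomials of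
degree `< m + p`, then the Taylor polynomials cancel identically and only remainders of size
`O(h ^ (m + p))` survive; dividing by `h ^ m` leaves `O(h ^ p)`. The four-point formula is the case
`m = 1`, `p = 4`, where exactness amounts to five numerical moment identities.
-/

open Asymptotics Filter Finset Topology
open scoped Nat

section IteratedDeriv

variable {𝕜 F : Type*} [NontriviallyNormedField 𝕜] [NormedAddCommGroup F] [NormedSpace 𝕜 F]

theorem iteratedDeriv_iteratedDeriv (k m : ℕ) (f : 𝕜 → F) :
    iteratedDeriv k (iteratedDeriv m f) = iteratedDeriv (m + k) f := by
  simp only [iteratedDeriv_eq_iterate, ← Function.iterate_add_apply, add_comm k m]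

theorem contDiffAt_iteratedDeriv {f : 𝕜 → F} {x : 𝕜} {m p : ℕ}
    (hf : ContDiffAt 𝕜 (m + p : ℕ) f x) : ContDiffAt 𝕜 p (iteratedDeriv m f) x := by
  rw [iteratedDeriv_eq_equiv_comp]
  exact (LinearIsometryEquiv.contDiff _).contDiffAt.comp x
    (hf.iteratedFDeriv_right (by norm_cast; lia))

end IteratedDeriv

section Taylor

variable {E : Type*} [NormedAddCommGroup E] [NormedSpace ℝ E] {f : ℝ → E} {v : ℝ}

theorem taylor_isLittleO_of_contDiffAt {n : ℕ} (hf : ContDiffAt ℝ n f v) :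
    (fun x ↦ f x - ∑ k ∈ range (n + 1), ((k ! : ℝ)⁻¹ * (x - v) ^ k) • iteratedDeriv k f v)
      =o[𝓝 v] fun x ↦ (x - v) ^ n := by
  obtain ⟨r, hr, hball⟩ := Metric.eventually_nhds_iff_ball.1 (hf.eventually (by simp))
  have hv : v ∈ Metric.ball v r := Metric.mem_ball_self hr
  have htaylor := taylor_isLittleO (convex_ball v r) hv fun y hy ↦ (hball y hy).contDiffWithinAt
  simpa only [taylor_within_apply, iteratedDerivWithin_of_isOpen Metric.isOpen_ball hv,
    Metric.isOpen_ball.nhdsWithin_eq hv] using htaylor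

theorem taylor_isBigO_of_contDiffAt {n : ℕ} (hf : ContDiffAt ℝ n f v) :
    (fun x ↦ f x - ∑ k ∈ range n, ((k ! : ℝ)⁻¹ * (x - v) ^ k) • iteratedDeriv k f v)
      =O[𝓝 v] fun x ↦ (x - v) ^ n := by
  have hlast : (fun x ↦ ((n ! : ℝ)⁻¹ * (x - v) ^ n) • iteratedDeriv n f v)
      =O[𝓝 v] fun x ↦ (x - v) ^ n :=
    .of_bound (‖(n ! : ℝ)⁻¹‖ * ‖iteratedDeriv n f v‖) <| .of_forall fun x ↦ by
      rw [norm_smul, norm_mul, mul_right_comm]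
  refine ((taylor_isLittleO_of_contDiffAt hf).isBigO.add hlast).congr_left fun x ↦ ?_
  rw [sum_range_succ]
  abel

theorem taylor_isBigO_along_ray {n : ℕ} (hf : ContDiffAt ℝ n f v) (c : ℝ) :
    (fun h ↦ f (v + h * c) - ∑ k ∈ range n, ((k ! : ℝ)⁻¹ * (h * c) ^ k) • iteratedDeriv k f v)
      =O[𝓝 0] fun h ↦ h ^ n := by
  have htendsto : Tendsto (fun h : ℝ ↦ v + h * c) (𝓝 0) (𝓝 v) :=
    Continuous.tendsto' (by fun_prop) _ _ (by simp)
  have hscale : (fun h : ℝ ↦ (h * c) ^ n) =O[𝓝 0] fun h ↦ h ^ n := by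
    simpa only [mul_pow, mul_comm] using isBigO_const_mul_self (c ^ n) (fun h : ℝ ↦ h ^ n) (𝓝 0)
  have htaylor := (taylor_isBigO_of_contDiffAt hf).comp_tendsto htendsto
  simp only [Function.comp_def, add_sub_cancel_left] at htaylor
  exact htaylor.trans hscale

end Taylor

/-- The finite difference formula `h ^ (-m) * ∑ i, w i * f (v + h * c i)` for the `m`-th derivative
at `v + h * d` is exact on polynomials of degree `< N`. By linearity, translation and scaling it is
enough to say so for the monomials `x ^ k` at `v = 0`, `h = 1`; the truncated `k - m` is harmless
because `k.descFactorial m = 0` for `k < m`. -/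
def IsExactStencil {ι : Type*} [Fintype ι] (w c : ι → ℝ) (d : ℝ) (m N : ℕ) : Prop :=
  ∀ k < N, ∑ i, w i * c i ^ k = k.descFactorial m * d ^ (k - m)

namespace IsExactStencil

variable {E : Type*} [NormedAddCommGroup E] [NormedSpace ℝ E] {f : ℝ → E} {v : ℝ}
  {ι : Type*} [Fintype ι] {w c : ι → ℝ} {d : ℝ} {m p : ℕ}

theorem sum_smul_taylor_eq (hw : IsExactStencil w c d m (m + p)) (a : ℕ → E) (h : ℝ) :
    ∑ i, w i • ∑ k ∈ range (m + p), ((k ! : ℝ)⁻¹ * (h * c i) ^ k) • a k =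
      h ^ m • ∑ k ∈ range p, ((k ! : ℝ)⁻¹ * (h * d) ^ k) • a (m + k) := by
  have hmoment : ∑ i, w i • ∑ k ∈ range (m + p), ((k ! : ℝ)⁻¹ * (h * c i) ^ k) • a k =
      ∑ k ∈ range (m + p), ((k ! : ℝ)⁻¹ * h ^ k * (k.descFactorial m * d ^ (k - m))) • a k := by
    simp only [smul_sum, smul_smul]
    rw [sum_comm]
    refine sum_congr rfl fun k hk ↦ ?_
    rw [← hw k (mem_range.1 hk), mul_sum, sum_smul]
    exact sum_congr rfl fun i _ ↦ by ring_nf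
  have hlow : ∑ k ∈ range m, ((k ! : ℝ)⁻¹ * h ^ k * (k.descFactorial m * d ^ (k - m))) • a k = 0 :=
    sum_eq_zero fun k hk ↦ by simp [Nat.descFactorial_of_lt (mem_range.1 hk)]
  rw [hmoment, sum_range_add, hlow, zero_add, smul_sum]
  refine sum_congr rfl fun k _ ↦ ?_
  have hfact : (k ! : ℝ) * (m + k).descFactorial m = (m + k)! := by
    exact_mod_cast by simpa using Nat.factorial_mul_descFactorial (Nat.le_add_right m k)
  rw [smul_smul, add_tsub_cancel_left, ← hfact]
  have hdesc : ((m + k).descFactorial m : ℝ) ≠ 0 := by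
    simp [Nat.descFactorial_eq_zero_iff_lt]
  congr 1
  field_simp
  ring

theorem sum_smul_sub_isBigO (hw : IsExactStencil w c d m (m + p))
    (hf : ContDiffAt ℝ (m + p : ℕ) f v) :
    (fun h ↦ ∑ i, w i • f (v + h * c i) - h ^ m • iteratedDeriv m f (v + h * d))
      =O[𝓝 0] fun h ↦ h ^ (m + p) := by
  have hsamples := IsBigO.fun_sum (s := univ) fun i _ ↦
    (taylor_isBigO_along_ray hf (c i)).const_smul_left (w i)
  have htarget := (isBigO_refl (fun h : ℝ ↦ h ^ m) (𝓝 0)).smul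
    (taylor_isBigO_along_ray (contDiffAt_iteratedDeriv hf) d)
  simp only [smul_eq_mul, ← pow_add, iteratedDeriv_iteratedDeriv] at htarget
  refine (hsamples.sub htarget).congr_left fun h ↦ ?_
  simp only [Pi.smul_apply, smul_sub, sum_sub_distrib]
  rw [hw.sum_smul_taylor_eq (fun k ↦ iteratedDeriv k f v)]
  abel

theorem inv_pow_smul_sum_smul_sub_isBigO (hw : IsExactStencil w c d m (m + p))
    (hf : ContDiffAt ℝ (m + p : ℕ) f v) :
    (fun h ↦ (h ^ m)⁻¹ • ∑ i, w i • f (v + h * c i) - iteratedDeriv m f (v + h * d))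
      =O[𝓝[≠] 0] fun h ↦ h ^ p := by
  refine ((isBigO_refl (fun h : ℝ ↦ (h ^ m)⁻¹) (𝓝[≠] 0)).smul
    ((hw.sum_smul_sub_isBigO hf).mono nhdsWithin_le_nhds)).congr' ?_ ?_ <;>
  · filter_upwards [self_mem_nhdsWithin] with h (hh : h ≠ 0)
    have hm : h ^ m ≠ 0 := pow_ne_zero m hh
    simp [smul_sub, pow_add, hm]

end IsExactStencil

theorem isExactStencil_fourPoint_midpoint :
    IsExactStencil ![1 / 24, -27 / 24, 27 / 24, -1 / 24] ![-1, 0, 1, 2] (1 / 2) 1 (1 + 4) := by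
  intro k hk
  simp only [Fin.sum_univ_four, Matrix.cons_val]
  interval_cases k <;> norm_num

theorem stmt17_general {E : Type*} [NormedAddCommGroup E] [NormedSpace ℝ E] {g : ℝ → E} {v : ℝ}
    (hg : ContDiffAt ℝ 5 g v) :
    ∃ C > (0 : ℝ), ∃ δ > (0 : ℝ), ∀ h : ℝ, h ≠ 0 → |h| < δ →
      ‖(24 * h)⁻¹ • (g (v - h) - (27 : ℝ) • g v + (27 : ℝ) • g (v + h) - g (v + 2 * h))
          - deriv g (v + h / 2)‖ ≤ C * |h| ^ 4 := by
  obtain ⟨C, hC, hbound⟩ :=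
    (isExactStencil_fourPoint_midpoint.inv_pow_smul_sum_smul_sub_isBigO hg).exists_pos
  obtain ⟨δ, hδ, hball⟩ := Metric.eventually_nhds_iff.1
    (eventually_nhdsWithin_iff.1 hbound.bound)
  refine ⟨C, hC, δ, hδ, fun h hh hlt ↦ ?_⟩
  have hformula : (24 * h)⁻¹ •
      (g (v - h) - (27 : ℝ) • g v + (27 : ℝ) • g (v + h) - g (v + 2 * h)) =
      (h ^ 1)⁻¹ • ∑ i, (![1 / 24, -27 / 24, 27 / 24, -1 / 24] : Fin 4 → ℝ) i •
        g (v + h * (![-1, 0, 1, 2] : Fin 4 → ℝ) i) := by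
    simp only [Fin.sum_univ_four, Matrix.cons_val, mul_neg_one, mul_zero, mul_one, add_zero,
      ← sub_eq_add_neg, mul_comm h 2, mul_inv, pow_one]
    module
  rw [hformula, ← iteratedDeriv_one, div_eq_mul_one_div h 2]
  simpa using hball (by simpa using hlt) hh

/-- Fourth-order accuracy of the four-point finite difference approximation of the
first derivative at the half-grid point:
`(g(v−h) − 27g(v) + 27g(v+h) − g(v+2h))/(24h) = g'(v + h/2) + O(h⁴)`. -/
theorem stmt17 (g : ℝ → ℝ) (hg : ContDiff ℝ 5 g) (v : ℝ) :
    ∃ C > (0:ℝ), ∃ δ > (0:ℝ), ∀ h : ℝ, 0 < h → h < δ →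
      |(g (v - h) - 27 * g v + 27 * g (v + h) - g (v + 2 * h)) / (24 * h)
          - deriv g (v + h / 2)| ≤ C * h ^ 4 := by
  obtain ⟨C, hC, δ, hδ, hbound⟩ := stmt17_general (hg.contDiffAt (x := v))
  refine ⟨C, hC, δ, hδ, fun h h0 hlt ↦ ?_⟩
  simpa only [abs_of_pos h0, smul_eq_mul, Real.norm_eq_abs, inv_mul_eq_div] using
    hbound h h0.ne' (by rwa [abs_of_pos h0])
end
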